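/- Under the standing assumptions, q = q_{μ,2} is a metric on X, and the identity map from (X,d) to (X,q) is a homeomorphism. -/

import Mathlib

open Metric MeasureTheory Set Filter Topology UniformSpace ENNReal
open scoped NNReal

noncomputable section

/-- The set `B_{xy} = B(x, d(x,y)) ∪ B(y, d(x,y))`. -/
def pairBall {X : Type*} [MetricSpace X] (x y : X) : Set X :=
  Metric.ball x (dist x y) ∪ Metric.ball y (dist x y)

/-- A `δ`-chain from `x` to `y`: a finite sequence `z 0 = x, …, z m = y` with
consecutive distances at most `δ`. -/
def IsDeltaChain {X : Type*} [MetricSpace X] (δ : ℝ) (x y : X) (z : ℕ → X) (m : ℕ) : Prop :=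
  z 0 = x ∧ z m = y ∧ ∀ j < m, dist (z j) (z (j + 1)) ≤ δ

/-- `q^δ_{μ,s}(x,y)`: infimum of `∑ μ(B_{x_j x_{j-1}})^{1/s}` over `δ`-chains from `x` to `y`. -/
def qDelta {X : Type*} [MetricSpace X] [MeasurableSpace X]
    (μ : Measure X) (s δ : ℝ) (x y : X) : ℝ≥0∞ :=
  ⨅ (m : ℕ) (z : ℕ → X) (_ : IsDeltaChain δ x y z m),
    ∑ j ∈ Finset.range m, μ (pairBall (z j) (z (j + 1))) ^ (1 / s)

/-- `q_{μ,s}(x,y) = limsup_{δ → 0⁺} q^δ_{μ,s}(x,y)`. -/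
def qmu {X : Type*} [MetricSpace X] [MeasurableSpace X]
    (μ : Measure X) (s : ℝ) (x y : X) : ℝ≥0∞ :=
  Filter.limsup (fun δ => qDelta μ s δ x y) (nhdsWithin (0 : ℝ) (Set.Ioi 0))

/-- `μ` is a doubling measure with constant `CD`: balls have positive finite measure and
`μ(B(x,2r)) ≤ CD · μ(B(x,r))`. -/
def IsDoublingWith {X : Type*} [MetricSpace X] [MeasurableSpace X]
    (μ : Measure X) (CD : ℝ≥0) : Prop :=
  (∀ (x : X) (r : ℝ), 0 < r → 0 < μ (Metric.ball x r) ∧ μ (Metric.ball x r) < ⊤) ∧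
    ∀ (x : X) (r : ℝ), 0 < r → μ (Metric.ball x (2 * r)) ≤ CD * μ (Metric.ball x r)

/-- `μ` is a `CW`-weak metric doubling measure of dimension `s`:
`μ(B_{xy})^{1/s} ≤ CW · q_{μ,s}(x,y)` for all `x, y`. -/
def IsWMDM {X : Type*} [MetricSpace X] [MeasurableSpace X]
    (μ : Measure X) (s : ℝ) (CW : ℝ≥0) : Prop :=
  ∀ x y : X, μ (pairBall x y) ^ (1 / s) ≤ CW * qmu μ s x y

/-- A continuum is a compact connected set. -/
def IsContinuum {X : Type*} [TopologicalSpace X] (K : Set X) : Prop :=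
  IsCompact K ∧ IsConnected K

/-- `X` is `λ`-linearly locally connected. -/
def IsLLC (X : Type*) [MetricSpace X] (lam : ℝ) : Prop :=
  ∀ (x : X) (r : ℝ), 0 < r →
    (∀ y ∈ Metric.ball x r, ∀ z ∈ Metric.ball x r,
      ∃ K : Set X, IsContinuum K ∧ K ⊆ Metric.ball x (lam * r) ∧ y ∈ K ∧ z ∈ K) ∧
    (∀ y z : X, y ∉ Metric.ball x r → z ∉ Metric.ball x r →
      ∃ K : Set X, IsContinuum K ∧ K ⊆ (Metric.ball x (r / lam))ᶜ ∧ y ∈ K ∧ z ∈ K)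

/-- The sphere `S²`, with the metric inherited from `ℝ³`. -/
abbrev Sphere2 : Set (EuclideanSpace ℝ (Fin 3)) := Metric.sphere 0 1

/-- A circle domain in `S²`: an open connected set each of whose complementary
connected components is a point or a round closed disk (a closed metric ball). -/
def IsCircleDomainS2 (Ω : Set ↥Sphere2) : Prop :=
  IsOpen Ω ∧ IsConnected Ω ∧ ∀ p ∈ Ωᶜ,
    connectedComponentIn Ωᶜ p = {p} ∨
      ∃ (c : ↥Sphere2) (ρ : ℝ), 0 < ρ ∧ connectedComponentIn Ωᶜ p = Metric.closedBall c ρ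

/-- A circle domain in the plane. -/
def IsCircleDomainC (Ω : Set ℂ) : Prop :=
  IsOpen Ω ∧ IsConnected Ω ∧ ∀ p ∈ Ωᶜ,
    connectedComponentIn Ωᶜ p = {p} ∨
      ∃ (c : ℂ) (ρ : ℝ), 0 < ρ ∧ connectedComponentIn Ωᶜ p = Metric.closedBall c ρ

/-- The residual set `X̄ ∖ X` inside the completion of `X`. -/
def resid (X : Type*) [MetricSpace X] : Set (Completion X) :=
  (Set.range ((↑) : X → Completion X))ᶜ

/-- The collection of connected components of `X̄ ∖ X`. -/
def residComps (X : Type*) [MetricSpace X] : Set (Set (Completion X)) :=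
  {C | ∃ p ∈ resid X, C = connectedComponentIn (resid X) p}

/-- Distance between two sets. -/
def setSetDist {Z : Type*} [MetricSpace Z] (A B : Set Z) : ℝ :=
  sInf (Set.image2 dist A B)

/-- `f` is `η`-quasisymmetric, for a homeomorphism `η` of `[0,∞)`. -/
def IsQSWith {X Y : Type*} [MetricSpace X] [MetricSpace Y]
    (η : ℝ≥0 ≃ₜ ℝ≥0) (f : X → Y) : Prop :=
  ∀ x y z : X, x ≠ z →
    nndist (f x) (f y) ≤ η (nndist x y / nndist x z) * nndist (f x) (f z)

/-- `ℓ = ⌈log₂ λ⌉`. -/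
def ellOf (lam : ℝ) : ℕ := (Int.ceil (Real.logb 2 lam)).toNat

/-- The constant `C_S = 16 C_W C_D^{28+16⌈log₂ λ⌉}`. -/
def CSconst (lam : ℝ) (CD CW : ℝ≥0) : ℝ≥0∞ :=
  16 * (CW : ℝ≥0∞) * (CD : ℝ≥0∞) ^ (28 + 16 * ellOf lam)

/-- `K` separates `A` and `B`: `A` and `B` lie in different components of the complement of `K`. -/
def SeparatesSets {X : Type*} [TopologicalSpace X] (K A B : Set X) : Prop :=
  A ⊆ Kᶜ ∧ B ⊆ Kᶜ ∧
    ∀ p ∈ A, ∀ p' ∈ B, connectedComponentIn Kᶜ p ≠ connectedComponentIn Kᶜ p'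

/-- A topological disk: a set homeomorphic to an open disk in the plane. -/
def IsTopDisk {X : Type*} [TopologicalSpace X] (U : Set X) : Prop :=
  Nonempty (↥U ≃ₜ ↥(Metric.ball (0 : ℂ) 1))

/-- Lower line integral `∫_γ ρ ds` over `γ : [a,b] → Y`, as a supremum of lower sums
over partitions of `[a,b]`. -/
def lowerLineIntegral {Y : Type*} [PseudoEMetricSpace Y]
    (ρ : Y → ℝ≥0∞) (γ : ℝ → Y) (a b : ℝ) : ℝ≥0∞ :=
  ⨆ (n : ℕ) (t : ℕ → ℝ) (_ : t 0 = a) (_ : t n = b) (_ : ∀ j < n, t j ≤ t (j + 1)),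
    ∑ j ∈ Finset.range n,
      (⨅ u ∈ Set.Icc (t j) (t (j + 1)), ρ (γ u)) * edist (γ (t j)) (γ (t (j + 1)))

/-- `γ` (with parameter interval `[0,1]`) is locally rectifiable on the open interval `(0,1)`. -/
def LocRectifiableOn {Y : Type*} [PseudoEMetricSpace Y] (γ : ℝ → Y) : Prop :=
  ∀ c d : ℝ, 0 < c → c ≤ d → d < 1 → eVariationOn γ (Set.Icc c d) < ⊤

/-- The line integral of `ρ` over the open part of `γ`. -/
def openLineIntegral {Y : Type*} [PseudoEMetricSpace Y] (ρ : Y → ℝ≥0∞) (γ : ℝ → Y) : ℝ≥0∞ :=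
  ⨆ (c : ℝ) (d : ℝ) (_ : 0 < c) (_ : c ≤ d) (_ : d < 1), lowerLineIntegral ρ γ c d

/-- `ρ` is admissible for the path family `Γ`. -/
def IsAdmissible {Y : Type*} [PseudoEMetricSpace Y] (Γ : Set (ℝ → Y)) (ρ : Y → ℝ≥0∞) : Prop :=
  ∀ γ ∈ Γ, LocRectifiableOn γ → 1 ≤ openLineIntegral ρ γ

def borelSpaceBorel (Y : Type*) [TopologicalSpace Y] : @BorelSpace Y _ (borel Y) :=
  @BorelSpace.mk Y _ (borel Y) rfl

/-- The Hausdorff 2-measure of a metric space, normalized to coincide with Lebesgue measure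
in the Euclidean plane. -/
def hausdorff2 (Y : Type*) [EMetricSpace Y] : @Measure Y (borel Y) :=
  ENNReal.ofReal (Real.pi / 4) •
    @Measure.hausdorffMeasure Y _ (borel Y) (borelSpaceBorel Y) 2

/-- The conformal modulus of a path family in a metric space, with respect to the
(normalized) Hausdorff 2-measure. -/
def modulusH2 {Y : Type*} [EMetricSpace Y] (Γ : Set (ℝ → Y)) : ℝ≥0∞ :=
  ⨅ (ρ : Y → ℝ≥0∞) (_ : @Measurable Y ℝ≥0∞ (borel Y) _ ρ) (_ : IsAdmissible Γ ρ),
    @MeasureTheory.lintegral Y (borel Y) (hausdorff2 Y) fun y => ρ y ^ 2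

/-- The conformal modulus of a path family in the plane, with respect to Lebesgue area measure. -/
def modulusC (Γ : Set (ℝ → ℂ)) : ℝ≥0∞ :=
  ⨅ (ρ : ℂ → ℝ≥0∞) (_ : Measurable ρ) (_ : IsAdmissible Γ ρ), ∫⁻ z, ρ z ^ 2

/-- A homeomorphism between metric spaces is `K`-quasiconformal if it distorts moduli of
path families by a factor of at most `K` in both directions. -/
def IsQCWith {Y Z : Type*} [EMetricSpace Y] [EMetricSpace Z] (K : ℝ≥0∞) (f : Y ≃ₜ Z) : Prop :=
  ∀ Γ : Set (ℝ → Y),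
    modulusH2 ((fun γ => (f : Y → Z) ∘ γ) '' Γ) ≤ K * modulusH2 Γ ∧
      modulusH2 Γ ≤ K * modulusH2 ((fun γ => (f : Y → Z) ∘ γ) '' Γ)

/-- The family `Γ(A,B;G)` of paths joining `A` and `B` in `G` (parameter interval `[0,1]`). -/
def joinPaths (A B G : Set ℂ) : Set (ℝ → ℂ) :=
  {γ | ContinuousOn γ (Set.Icc 0 1) ∧ γ 0 ∈ A ∧ γ 1 ∈ B ∧
    γ 0 ∈ closure G ∧ γ 1 ∈ closure G ∧ ∀ u ∈ Set.Ioo (0 : ℝ) 1, γ u ∈ G}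

/-- The constant `α = 2^{−2−2M−π²C_W²C_D^{1+log₂ C_X}/(8 log 2)}`. -/
def alphaConst (M : ℕ) (CD CW : ℝ≥0) (CX : ℝ) : ℝ :=
  (2 : ℝ) ^ (-2 - 2 * (M : ℝ) -
    Real.pi ^ 2 * (CW : ℝ) ^ 2 * (CD : ℝ) ^ ((1 : ℝ) + Real.logb 2 CX) / (8 * Real.log 2))

section basics
variable {X : Type*} [MetricSpace X] [MeasurableSpace X]

theorem aux_pairBall_comm (x y : X) : pairBall x y = pairBall y x := by
  unfold pairBall; rw [dist_comm, Set.union_comm]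

theorem aux_pairBall_sub (x y : X) (r : ℝ) (h : dist x y ≤ r) :
    pairBall x y ⊆ Metric.ball x (2 * r) := by
  intro z hz
  rcases hz with hz | hz
  · rw [Metric.mem_ball] at *
    have := dist_nonneg (x := x) (y := y)
    have := dist_nonneg (x := z) (y := x)
    linarith
  · rw [Metric.mem_ball] at *
    have := dist_triangle z y x
    rw [dist_comm y x] at this
    linarith

theorem aux_q_le (μ : Measure X) (s δ : ℝ) (x y : X) (m : ℕ) (z : ℕ → X)
    (h : IsDeltaChain δ x y z m) :
    qDelta μ s δ x y ≤ ∑ j ∈ Finset.range m, μ (pairBall (z j) (z (j + 1))) ^ (1 / s) := by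
  unfold qDelta
  exact iInf_le_of_le m (iInf_le_of_le z (iInf_le_of_le h le_rfl))

theorem aux_q_self (μ : Measure X) (s δ : ℝ) (x : X) : qDelta μ s δ x x = 0 := by
  have := aux_q_le μ s δ x x 0 (fun _ => x) ⟨rfl, rfl, by simp⟩
  simpa using this

theorem aux_q_single (μ : Measure X) (s δ : ℝ) (x y : X) (h : dist x y ≤ δ) :
    qDelta μ s δ x y ≤ μ (pairBall x y) ^ (1 / s) := by
  have := aux_q_le μ s δ x y 1 (fun j => if j = 0 then x else y) ⟨by simp, by simp, by simpa⟩
  simpa using this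

theorem aux_q_anti (μ : Measure X) (s : ℝ) {δ δ' : ℝ} (x y : X) (h : δ ≤ δ') :
    qDelta μ s δ' x y ≤ qDelta μ s δ x y := by
  refine le_iInf fun m => le_iInf fun z => le_iInf fun hz => ?_
  exact aux_q_le μ s δ' x y m z ⟨hz.1, hz.2.1, fun j hj => (hz.2.2 j hj).trans h⟩

theorem aux_q_symm_le (μ : Measure X) (s δ : ℝ) (x y : X) :
    qDelta μ s δ y x ≤ qDelta μ s δ x y := by
  refine le_iInf fun m => le_iInf fun z => le_iInf fun hz => ?_
  refine (aux_q_le μ s δ y x m (fun j => z (m - j)) ⟨by simp [hz.2.1], by simp [hz.1], ?_⟩).trans ?_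
  · intro j hj
    have := hz.2.2 (m - (j + 1)) (by omega)
    rw [show m - (j + 1) + 1 = m - j by omega] at this
    rwa [dist_comm]
  · rw [← Finset.sum_range_reflect]
    refine Finset.sum_le_sum fun j hj => ?_
    have hj := Finset.mem_range.1 hj
    rw [show m - (m - 1 - j) = j + 1 by omega, show m - (m - 1 - j + 1) = j by omega,
      aux_pairBall_comm]

theorem aux_q_symm (μ : Measure X) (s δ : ℝ) (x y : X) :
    qDelta μ s δ x y = qDelta μ s δ y x :=
  le_antisymm (aux_q_symm_le μ s δ y x) (aux_q_symm_le μ s δ x y)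

theorem aux_q_tri (μ : Measure X) (s δ : ℝ) (x y z : X) :
    qDelta μ s δ x z ≤ qDelta μ s δ x y + qDelta μ s δ y z := by
  unfold qDelta
  simp only [ENNReal.iInf_add, ENNReal.add_iInf]
  refine le_iInf fun m => le_iInf fun a => le_iInf fun ha => le_iInf fun n => le_iInf fun b =>
    le_iInf fun hb => ?_
  refine (aux_q_le μ s δ x z (n + m) (fun j => if j ≤ n then b j else a (j - n))
    ⟨?_, ?_, ?_⟩).trans ?_
  · simp [hb.1]
  · by_cases h : m = 0
    · subst h
      simp [hb.2.1, ← ha.1, ← ha.2.1]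
    · simp [h, ha.2.1]
  · intro j hj
    by_cases h : j + 1 ≤ n
    · simp only [h, if_true, show j ≤ n by omega]
      exact hb.2.2 j (by omega)
    · by_cases h' : j = n
      · subst h'
        have := ha.2.2 0 (by omega)
        rw [ha.1, ← hb.2.1] at this
        simpa using this
      · simp only [h, if_false, show ¬ j ≤ n by omega]
        rw [show j + 1 - n = j - n + 1 by omega]
        exact ha.2.2 (j - n) (by omega)
  · rw [Finset.sum_range_add]
    refine add_le_add (Finset.sum_le_sum fun j hj => ?_) (Finset.sum_le_sum fun j hj => ?_)
    · have hj := Finset.mem_range.1 hj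
      simp only [show j ≤ n by omega, show j + 1 ≤ n by omega, if_true, le_refl]
    · by_cases h : j = 0
      · subst h
        simp [hb.2.1, ha.1]
      · simp only [show ¬ n + j ≤ n by omega, show ¬ n + j + 1 ≤ n by omega, if_false]
        rw [show n + j - n = j by omega, show n + j + 1 - n = j + 1 by omega]

theorem aux_q_le_qmu (μ : Measure X) (s δ : ℝ) (hδ : 0 < δ) (x y : X) :
    qDelta μ s δ x y ≤ qmu μ s x y := by
  unfold qmu
  refine le_limsup_of_frequently_le' (Filter.Eventually.frequently ?_)
  have : Ioo (0:ℝ) δ ∈ nhdsWithin (0 : ℝ) (Set.Ioi 0) := Ioo_mem_nhdsGT hδ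
  filter_upwards [this] with t ht
  exact aux_q_anti μ s x y ht.2.le

theorem aux_qmu_le (μ : Measure X) (s : ℝ) (x y : X) (b : ℝ≥0∞)
    (h : ∀ δ : ℝ, 0 < δ → qDelta μ s δ x y ≤ b) : qmu μ s x y ≤ b := by
  unfold qmu
  refine limsup_le_of_le (by isBoundedDefault) ?_
  filter_upwards [self_mem_nhdsWithin] with t ht
  exact h t ht

theorem aux_qmu_self (μ : Measure X) (s : ℝ) (x : X) : qmu μ s x x = 0 :=
  le_antisymm (aux_qmu_le μ s x x 0 fun δ _ => (aux_q_self μ s δ x).le) bot_le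

theorem aux_qmu_symm (μ : Measure X) (s : ℝ) (x y : X) : qmu μ s x y = qmu μ s y x := by
  unfold qmu
  simp_rw [aux_q_symm μ s _ x y]

theorem aux_qmu_tri (μ : Measure X) (s : ℝ) (x y z : X) :
    qmu μ s x z ≤ qmu μ s x y + qmu μ s y z :=
  aux_qmu_le μ s x z _ fun δ hδ => (aux_q_tri μ s δ x y z).trans
    (add_le_add (aux_q_le_qmu μ s δ hδ x y) (aux_q_le_qmu μ s δ hδ y z))

end basics

/-- Discrete `H¹ = 0` for the quarter plane grid. -/
theorem aux_H1 (h v : ℕ → ℕ → ℤ)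
    (hc : ∀ i j, h i j + v (i + 1) j = v i j + h i (j + 1)) :
    ∃ g : ℕ → ℕ → ℤ, (∀ i j, g (i + 1) j - g i j = h i j) ∧ ∀ i j, g i (j + 1) - g i j = v i j := by
  refine ⟨fun i j => ∑ k ∈ Finset.range i, h k 0 + ∑ l ∈ Finset.range j, v i l, ?_, ?_⟩
  · intro i j
    induction j with
    | zero => simp [Finset.sum_range_succ]
    | succ j ih =>
      have := hc i j
      simp only [Finset.sum_range_succ] at ih ⊢
      linarith
  · intro i j
    simp [Finset.sum_range_succ]

/-- Discrete Janiszewski. -/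
theorem aux_J {ι : Type*} [Finite ι] (c : ℕ → ℕ → Option ι)
    (hc : ∀ i j i' j' i₀ j₀ a b, i₀ ≤ i → i ≤ i₀ + 1 → i₀ ≤ i' → i' ≤ i₀ + 1 →
      j₀ ≤ j → j ≤ j₀ + 1 → j₀ ≤ j' → j' ≤ j₀ + 1 → c i j = some a → c i' j' = some b → a = b)
    (f : ℕ → ℕ → ℤ)
    (hfh : ∀ i j, c i j = none → c (i + 1) j = none → f (i + 1) j = f i j)
    (hfv : ∀ i j, c i j = none → c i (j + 1) = none → f i (j + 1) = f i j)
    (x y : ℕ × ℕ) (hxy : f x.1 x.2 ≠ f y.1 y.2) :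
    ∃ (a : ι) (g : ℕ → ℕ → ℤ),
      (∀ i j, c i j ≠ some a → c (i + 1) j ≠ some a → g (i + 1) j = g i j) ∧
      (∀ i j, c i j ≠ some a → c i (j + 1) ≠ some a → g i (j + 1) = g i j) ∧
      g x.1 x.2 ≠ g y.1 y.2 := by
  classical
  have : Fintype ι := Fintype.ofFinite ι
  let h : ι → ℕ → ℕ → ℤ := fun a i j =>
    if c i j = some a ∨ c (i + 1) j = some a then f (i + 1) j - f i j else 0
  let v : ι → ℕ → ℕ → ℤ := fun a i j =>
    if c i j = some a ∨ c i (j + 1) = some a then f i (j + 1) - f i j else 0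
  have hex : ∀ a, ∃ g : ℕ → ℕ → ℤ,
      (∀ i j, g (i + 1) j - g i j = h a i j) ∧ ∀ i j, g i (j + 1) - g i j = v a i j := by
    intro a
    apply aux_H1
    intro i j
    by_cases hs : c i j = some a ∨ c (i + 1) j = some a ∨ c i (j + 1) = some a ∨
        c (i + 1) (j + 1) = some a
    · -- all labels in the square are `a`
      have key : ∀ i' j', i ≤ i' → i' ≤ i + 1 → j ≤ j' → j' ≤ j + 1 →
          c i' j' = none ∨ c i' j' = some a := by
        intro i' j' h1 h2 h3 h4
        rcases hcc : c i' j' with _ | b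
        · left; rfl
        · right
          rcases hs with hs | hs | hs | hs
          · rw [hc _ _ _ _ i j _ _ h1 h2 (by omega) (by omega) h3 h4 (by omega) (by omega) hcc hs]
          · rw [hc _ _ _ _ i j _ _ h1 h2 (by omega) (by omega) h3 h4 (by omega) (by omega) hcc hs]
          · rw [hc _ _ _ _ i j _ _ h1 h2 (by omega) (by omega) h3 h4 (by omega) (by omega) hcc hs]
          · rw [hc _ _ _ _ i j _ _ h1 h2 (by omega) (by omega) h3 h4 (by omega) (by omega) hcc hs]
      have H : ∀ j', j ≤ j' → j' ≤ j + 1 → h a i j' = f (i + 1) j' - f i j' := by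
        intro j' h3 h4
        simp only [h]
        split_ifs with hh
        · rfl
        · push Not at hh
          have e1 := (key i j' (by omega) (by omega) h3 h4).resolve_right hh.1
          have e2 := (key (i + 1) j' (by omega) (by omega) h3 h4).resolve_right hh.2
          rw [hfh i j' e1 e2]; simp
      have V : ∀ i', i ≤ i' → i' ≤ i + 1 → v a i' j = f i' (j + 1) - f i' j := by
        intro i' h3 h4
        simp only [v]
        split_ifs with hh
        · rfl
        · push Not at hh
          have e1 := (key i' j h3 h4 (by omega) (by omega)).resolve_right hh.1
          have e2 := (key i' (j + 1) h3 h4 (by omega) (by omega)).resolve_right hh.2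
          rw [hfv i' j e1 e2]; simp
      rw [H j (by omega) (by omega), H (j + 1) (by omega) (by omega), V i (by omega) (by omega),
        V (i + 1) (by omega) (by omega)]
      ring
    · push Not at hs
      simp [h, v, hs]
  choose g hg1 hg2 using hex
  have sumh : ∀ i j, ∑ a, h a i j = f (i + 1) j - f i j := by
    intro i j
    by_cases hs : ∃ a, c i j = some a ∨ c (i + 1) j = some a
    · obtain ⟨a, ha⟩ := hs
      rw [Finset.sum_eq_single a]
      · simp only [h, if_pos ha]
      · intro b _ hb
        simp only [h]
        rw [if_neg]
        rintro (hh | hh) <;> rcases ha with ha | ha <;>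
        exact hb (hc _ _ _ _ i j _ _ (by omega) (by omega) (by omega) (by omega) (by omega)
          (by omega) (by omega) (by omega) hh ha)
      · simp
    · push Not at hs
      have e1 : c i j = none := Option.eq_none_iff_forall_ne_some.2 fun a => (hs a).1
      have e2 : c (i + 1) j = none := Option.eq_none_iff_forall_ne_some.2 fun a => (hs a).2
      rw [hfh i j e1 e2]
      simp [h, e1, e2]
  have sumv : ∀ i j, ∑ a, v a i j = f i (j + 1) - f i j := by
    intro i j
    by_cases hs : ∃ a, c i j = some a ∨ c i (j + 1) = some a
    · obtain ⟨a, ha⟩ := hs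
      rw [Finset.sum_eq_single a]
      · simp only [v, if_pos ha]
      · intro b _ hb
        simp only [v]
        rw [if_neg]
        rintro (hh | hh) <;> rcases ha with ha | ha <;>
        exact hb (hc _ _ _ _ i j _ _ (by omega) (by omega) (by omega) (by omega) (by omega)
          (by omega) (by omega) (by omega) hh ha)
      · simp
    · push Not at hs
      have e1 : c i j = none := Option.eq_none_iff_forall_ne_some.2 fun a => (hs a).1
      have e2 : c i (j + 1) = none := Option.eq_none_iff_forall_ne_some.2 fun a => (hs a).2
      rw [hfv i j e1 e2]
      simp [v, e1, e2]
  have hconst : ∀ i j, f i j - ∑ a, g a i j = f 0 0 - ∑ a, g a 0 0 := by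
    have c1 : ∀ i j, f (i + 1) j - ∑ a, g a (i + 1) j = f i j - ∑ a, g a i j := by
      intro i j
      have : ∑ a, g a (i + 1) j - ∑ a, g a i j = f (i + 1) j - f i j := by
        rw [← Finset.sum_sub_distrib, ← sumh]
        exact Finset.sum_congr rfl fun a _ => hg1 a i j
      linarith
    have c2 : ∀ i j, f i (j + 1) - ∑ a, g a i (j + 1) = f i j - ∑ a, g a i j := by
      intro i j
      have : ∑ a, g a i (j + 1) - ∑ a, g a i j = f i (j + 1) - f i j := by
        rw [← Finset.sum_sub_distrib, ← sumv]
        exact Finset.sum_congr rfl fun a _ => hg2 a i j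
      linarith
    intro i j
    induction i with
    | zero =>
      induction j with
      | zero => rfl
      | succ j ih => rw [c2, ih]
    | succ i ih => rw [c1, ih]
  by_contra hcon
  push Not at hcon
  apply hxy
  have key : ∀ a, g a x.1 x.2 = g a y.1 y.2 := by
    intro a
    apply hcon a (g a)
    · intro i j h1 h2
      have := hg1 a i j
      simp only [h, h1, h2, or_self, if_false] at this
      linarith
    · intro i j h1 h2
      have := hg2 a i j
      simp only [v, h1, h2, or_self, if_false] at this
      linarith
  have e1 := hconst x.1 x.2
  have e2 := hconst y.1 y.2
  simp only [key] at e1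
  linarith

theorem aux_chart {X : Type*} [MetricSpace X]
    (hhom : ∃ Ω₀ : Set ↥Sphere2, IsCircleDomainS2 Ω₀ ∧ Nonempty (X ≃ₜ ↥Ω₀)) (x : X) :
    ∃ φ : ℝ × ℝ → X, IsOpenEmbedding φ ∧ φ (1 / 2, 1 / 2) = x := by
  obtain ⟨Ω, ⟨hO, -, -⟩, ⟨h⟩⟩ := hhom
  let p : ↥Sphere2 := (h x : ↥Sphere2)
  let e : OpenPartialHomeomorph ↥Sphere2 (EuclideanSpace ℝ (Fin 2)) :=
    chartAt (EuclideanSpace ℝ (Fin 2)) p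
  have hp : p ∈ e.source := mem_chart_source _ p
  have hV : IsOpen (e.target ∩ e.symm ⁻¹' Ω) := e.isOpen_inter_preimage_symm hO
  have hc : e p ∈ e.target ∩ e.symm ⁻¹' Ω := by
    refine ⟨e.map_source hp, ?_⟩
    simp only [mem_preimage, e.left_inv hp]
    exact (h x).2
  obtain ⟨r, hr, hsub⟩ := Metric.isOpen_iff.1 hV _ hc
  let b := OpenPartialHomeomorph.univBall (e p) r
  let E := b.trans e.symm
  have hb : ∀ z, b z ∈ Metric.ball (e p) r := by
    intro z
    have := b.map_source (x := z) (by simp [b])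
    rwa [OpenPartialHomeomorph.univBall_target _ hr] at this
  have hE : E.source = univ := by
    ext z
    simp only [E, OpenPartialHomeomorph.trans_source, mem_univ, iff_true]
    exact ⟨by simp [b], (hsub (hb z)).1⟩
  have hEo : IsOpenEmbedding E := E.isOpenEmbedding hE
  have hEΩ : ∀ z, E z ∈ Ω := fun z => (hsub (hb z)).2
  let F : EuclideanSpace ℝ (Fin 2) → ↥Ω := fun z => ⟨E z, hEΩ z⟩
  have hF : IsOpenEmbedding F :=
    IsOpenEmbedding.of_comp F hO.isOpenEmbedding_subtypeVal hEo
  let κ : ℝ × ℝ ≃ₜ EuclideanSpace ℝ (Fin 2) :=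
    Homeomorph.finTwoArrow.symm.trans (EuclideanSpace.equiv (Fin 2) ℝ).symm.toHomeomorph
  let τ : ℝ × ℝ ≃ₜ ℝ × ℝ := Homeomorph.addRight (-(1 / 2, 1 / 2))
  refine ⟨fun q => h.symm (F (κ (τ q))), ?_, ?_⟩
  · exact h.symm.isOpenEmbedding.comp (hF.comp (κ.isOpenEmbedding.comp τ.isOpenEmbedding))
  · have h1 : τ (1 / 2, 1 / 2) = 0 := by
      simp [τ]
    have h2 : κ 0 = 0 := by
      ext i
      fin_cases i <;> rfl
    have h3 : F 0 = h x := by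
      apply Subtype.ext
      simp only [F, E, OpenPartialHomeomorph.coe_trans, Function.comp_apply, b,
        OpenPartialHomeomorph.univBall_apply_zero]
      exact e.left_inv hp
    simp only [h1, h2, h3, Homeomorph.symm_apply_apply]

/-- clamp to `[0,1]` -/
def auxCl (t : ℝ) : ℝ := max 0 (min t 1)

theorem auxCl_mem (t : ℝ) : auxCl t ∈ Icc (0:ℝ) 1 := by
  unfold auxCl
  exact ⟨le_max_left _ _, max_le zero_le_one (min_le_right _ _)⟩

theorem auxCl_of_mem {t : ℝ} (h : t ∈ Icc (0:ℝ) 1) : auxCl t = t := by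
  unfold auxCl
  rw [min_eq_left h.2, max_eq_right h.1]

theorem auxCl_lip (s t : ℝ) : |auxCl s - auxCl t| ≤ |s - t| := by
  unfold auxCl
  calc |max 0 (min s 1) - max 0 (min t 1)| ≤ |min s 1 - min t 1| := by
        have := abs_max_sub_max_le_max 0 (min s 1) 0 (min t 1)
        simpa using this
    _ ≤ |s - t| := by
        have := abs_min_sub_min_le_max s 1 t 1
        simpa using this

theorem aux_ext (g : ℕ → ℕ → ℤ) (n : ℕ) (P : ℕ → ℕ → Prop)
    (hg1 : ∀ i j, P i j → P (i + 1) j → g (i + 1) j = g i j)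
    (hg2 : ∀ i j, P i j → P i (j + 1) → g i (j + 1) = g i j)
    (hP : ∀ i j, (i = 0 ∨ j = 0 ∨ n ≤ i ∨ n ≤ j) → P i j) (i j : ℕ)
    (h : i = 0 ∨ j = 0 ∨ n ≤ i ∨ n ≤ j) : g i j = g 0 0 := by
  have h0 : ∀ j, g 0 j = g 0 0 := by
    intro j
    induction j with
    | zero => rfl
    | succ j ih => rw [hg2 0 j (hP _ _ (by omega)) (hP _ _ (by omega)), ih]
  have h1 : ∀ i, g i 0 = g 0 0 := by
    intro j
    induction j with
    | zero => rfl
    | succ j ih => rw [hg1 j 0 (hP _ _ (by omega)) (hP _ _ (by omega)), ih]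
  rcases h with h | h | h | h
  · subst h; exact h0 j
  · subst h; exact h1 i
  · rw [← h1 i]
    induction j with
    | zero => rfl
    | succ j ih => rw [hg2 i j (hP _ _ (by omega)) (hP _ _ (by omega)), ih]
  · rw [← h0 j]
    induction i with
    | zero => rfl
    | succ i ih => rw [hg1 i j (hP _ _ (by omega)) (hP _ _ (by omega)), ih]

theorem aux_floor_near (n : ℕ) (s t : ℝ) (hs : s ∈ Icc (0:ℝ) 1) (ht : t ∈ Icc (0:ℝ) 1)
    (h : |s - t| ≤ 1 / n) (hn : 0 < n) :
    ⌊n * s⌋₊ ≤ ⌊n * t⌋₊ + 1 ∧ ((⌊n * s⌋₊ : ℝ) / n) ∈ Icc (0:ℝ) 1 ∧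
      |(⌊n * s⌋₊ : ℝ) / n - t| ≤ 2 / n := by
  have hn' : (0:ℝ) < n := by exact_mod_cast hn
  have h1 : (n:ℝ) * |s - t| ≤ 1 := by
    calc (n:ℝ) * |s - t| ≤ n * (1 / n) := by gcongr
      _ = 1 := by field_simp
  have h2 : |n * s - n * t| ≤ 1 := by
    rw [← mul_sub, abs_mul, abs_of_pos hn']; exact h1
  have h3 := abs_le.1 h2
  have hs0 : 0 ≤ n * s := mul_nonneg hn'.le hs.1
  have ht0 : 0 ≤ n * t := mul_nonneg hn'.le ht.1
  have f1 := Nat.floor_le hs0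
  have f2 := Nat.lt_floor_add_one (n * t)
  have f3 := Nat.lt_floor_add_one (n * s)
  refine ⟨?_, ⟨by positivity, ?_⟩, ?_⟩
  · have : (⌊n * s⌋₊ : ℝ) < ⌊n * t⌋₊ + 1 + 1 := by linarith
    have : ⌊n * s⌋₊ < ⌊n * t⌋₊ + 1 + 1 := by exact_mod_cast this
    omega
  · rw [div_le_one hn']
    have : n * s ≤ n * 1 := mul_le_mul_of_nonneg_left hs.2 hn'.le
    linarith
  · have : (⌊n * s⌋₊ : ℝ) / n - t = (⌊n * s⌋₊ - n * t) / n := by field_simp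
    rw [this, abs_div, abs_of_pos hn']
    gcongr
    rw [abs_le]
    constructor <;> linarith

theorem aux_G {X : Type*} [MetricSpace X] (φ : ℝ × ℝ → X) (hφ : IsOpenEmbedding φ)
    (n : ℕ) (hn0 : 0 < n) (δ : ℝ)
    (hn : ∀ p ∈ Icc (0:ℝ) 1 ×ˢ Icc (0:ℝ) 1, ∀ p' ∈ Icc (0:ℝ) 1 ×ˢ Icc (0:ℝ) 1,
      |p.1 - p'.1| ≤ 2 / n → |p.2 - p'.2| ≤ 2 / n → dist (φ p) (φ p') < δ)
    (ν : ℕ → ℕ → X) (hν : ∀ i j : ℕ, dist (φ (auxCl (i / n), auxCl (j / n))) (ν i j) ≤ δ)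
    (K : Set X) (g : ℕ → ℕ → ℤ)
    (hg1 : ∀ i j, ν i j ∉ K → ν (i + 1) j ∉ K → g (i + 1) j = g i j)
    (hg2 : ∀ i j, ν i j ∉ K → ν i (j + 1) ∉ K → g i (j + 1) = g i j)
    (F : Set X) (hF : IsPreconnected F) (hFK : ∀ z ∈ F, ∀ k ∈ K, 3 * δ ≤ dist z k)
    (hcase : F ⊆ φ '' (Ioo (0:ℝ) 1 ×ˢ Ioo (0:ℝ) 1) ∨
      ∀ i j : ℕ, (i = 0 ∨ j = 0 ∨ n ≤ i ∨ n ≤ j) → ν i j ∉ K)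
    (p p' : ℝ × ℝ) (hp : p ∈ Icc (0:ℝ) 1 ×ˢ Icc (0:ℝ) 1)
    (hp' : p' ∈ Icc (0:ℝ) 1 ×ˢ Icc (0:ℝ) 1) (hpF : φ p ∈ F) (hpF' : φ p' ∈ F) :
    g ⌊n * p.1⌋₊ ⌊n * p.2⌋₊ = g ⌊n * p'.1⌋₊ ⌊n * p'.2⌋₊ := by
  classical
  let S : Set (ℝ × ℝ) := Icc (0:ℝ) 1 ×ˢ Icc (0:ℝ) 1
  let e : X → ℝ × ℝ := Function.invFun φ
  have he : ∀ q, e (φ q) = q := Function.leftInverse_invFun hφ.injective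
  let G : X → ℤ := fun z => if z ∈ φ '' S then g ⌊n * (e z).1⌋₊ ⌊n * (e z).2⌋₊ else g 0 0
  have hG : ∀ q ∈ S, G (φ q) = g ⌊n * q.1⌋₊ ⌊n * q.2⌋₊ := by
    intro q hq
    simp only [G, if_pos (mem_image_of_mem φ hq), he]
  have hSc : IsCompact S := isCompact_Icc.prod isCompact_Icc
  have hSc' : IsClosed (φ '' S) := (hSc.image hφ.continuous).isClosed
  have hcont : ContinuousOn G F := by
    intro z hz
    suffices h : ∀ᶠ w in 𝓝[F] z, G w = G z by
      exact (continuousWithinAt_const (b := G z)).congr_of_eventuallyEq h rfl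
    by_cases hzS : z ∈ φ '' S
    · obtain ⟨q, hq, rfl⟩ := hzS
      have hn' : (0:ℝ) < n := by exact_mod_cast hn0
      have ev : ∀ᶠ q' in 𝓝 q, |q'.1 - q.1| ≤ 1 / n ∧ |q'.2 - q.2| ≤ 1 / n ∧
          (0 < q.1 → 0 < q'.1) ∧ (0 < q.2 → 0 < q'.2) ∧ (q.1 < 1 → q'.1 < 1) ∧
          (q.2 < 1 → q'.2 < 1) := by
        have c1 : ContinuousAt (fun q' : ℝ × ℝ => q'.1) q := continuous_fst.continuousAt
        have c2 : ContinuousAt (fun q' : ℝ × ℝ => q'.2) q := continuous_snd.continuousAt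
        have a1 : ∀ᶠ q' in 𝓝 q, |q'.1 - q.1| ≤ 1 / n := by
          filter_upwards [c1.eventually (Metric.ball_mem_nhds q.1 (show (0:ℝ) < 1 / n by positivity))]
            with q' h
          exact (Metric.mem_ball.1 h).le
        have a2 : ∀ᶠ q' in 𝓝 q, |q'.2 - q.2| ≤ 1 / n := by
          filter_upwards [c2.eventually (Metric.ball_mem_nhds q.2 (show (0:ℝ) < 1 / n by positivity))]
            with q' h
          exact (Metric.mem_ball.1 h).le
        have a3 : ∀ᶠ q' in 𝓝 q, (0 < q.1 → 0 < q'.1) := by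
          by_cases h : 0 < q.1
          · filter_upwards [c1.eventually (lt_mem_nhds h)] with q' h' _ using h'
          · simp [h]
        have a4 : ∀ᶠ q' in 𝓝 q, (0 < q.2 → 0 < q'.2) := by
          by_cases h : 0 < q.2
          · filter_upwards [c2.eventually (lt_mem_nhds h)] with q' h' _ using h'
          · simp [h]
        have a5 : ∀ᶠ q' in 𝓝 q, (q.1 < 1 → q'.1 < 1) := by
          by_cases h : q.1 < 1
          · filter_upwards [c1.eventually (gt_mem_nhds h)] with q' h' _ using h'
          · simp [h]
        have a6 : ∀ᶠ q' in 𝓝 q, (q.2 < 1 → q'.2 < 1) := by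
          by_cases h : q.2 < 1
          · filter_upwards [c2.eventually (gt_mem_nhds h)] with q' h' _ using h'
          · simp [h]
        filter_upwards [a1, a2, a3, a4, a5, a6] with q' b1 b2 b3 b4 b5 b6
        exact ⟨b1, b2, b3, b4, b5, b6⟩
      have ev' := hφ.isOpenMap.image_mem_nhds ev
      filter_upwards [mem_nhdsWithin_of_mem_nhds ev', self_mem_nhdsWithin] with w hw hwF
      obtain ⟨q', ⟨b1, b2, b3, b4, b5, b6⟩, rfl⟩ := hw
      by_cases hq' : q' ∈ S
      · rw [hG q hq, hG q' hq']
        have key : ∀ i j : ℕ, ((i : ℝ) / n) ∈ Icc (0:ℝ) 1 → ((j : ℝ) / n) ∈ Icc (0:ℝ) 1 →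
            |(i : ℝ) / n - q.1| ≤ 2 / n → |(j : ℝ) / n - q.2| ≤ 2 / n → ν i j ∉ K := by
          intro i j hi hj h1 h2 hk
          have d1 := hν i j
          rw [auxCl_of_mem hi, auxCl_of_mem hj] at d1
          have d2 := hn ((i : ℝ) / n, (j : ℝ) / n) ⟨hi, hj⟩ q hq h1 h2
          have d3 := hFK _ hz _ hk
          have d4 := dist_triangle (φ q) (φ ((i : ℝ) / n, (j : ℝ) / n)) (ν i j)
          rw [dist_comm] at d2
          linarith [dist_nonneg (x := φ q) (y := φ ((i : ℝ) / n, (j : ℝ) / n))]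
        obtain ⟨A1, A2, A3⟩ := aux_floor_near n q'.1 q.1 hq'.1 hq.1 b1 hn0
        obtain ⟨B1, B2, B3⟩ := aux_floor_near n q'.2 q.2 hq'.2 hq.2 b2 hn0
        have z0 : (0:ℝ) ≤ 1 / n := by positivity
        obtain ⟨-, C2, C3⟩ := aux_floor_near n q.1 q.1 hq.1 hq.1 (by simp) hn0
        obtain ⟨-, D2, D3⟩ := aux_floor_near n q.2 q.2 hq.2 hq.2 (by simp) hn0
        have A1' := (aux_floor_near n q.1 q'.1 hq.1 hq'.1 (by rwa [abs_sub_comm]) hn0).1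
        have B1' := (aux_floor_near n q.2 q'.2 hq.2 hq'.2 (by rwa [abs_sub_comm]) hn0).1
        have k1 := key _ _ A2 B2 A3 B3
        have k2 := key _ _ C2 B2 C3 B3
        have k3 := key _ _ C2 D2 C3 D3
        have step1 : ∀ a a' b : ℕ, a' ≤ a + 1 → a ≤ a' + 1 → ν a b ∉ K → ν a' b ∉ K →
            g a' b = g a b := by
          intro a a' b h1 h2 h3 h4
          rcases (show a' = a ∨ a' = a + 1 ∨ a = a' + 1 by omega) with h | h | h
          · rw [h]
          · subst h; exact hg1 _ _ h3 h4
          · subst h; exact (hg1 _ _ h4 h3).symm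
        have step2 : ∀ a b b' : ℕ, b' ≤ b + 1 → b ≤ b' + 1 → ν a b ∉ K → ν a b' ∉ K →
            g a b' = g a b := by
          intro a a' b h1 h2 h3 h4
          rcases (show b = a' ∨ b = a' + 1 ∨ a' = b + 1 by omega) with h | h | h
          · rw [h]
          · subst h; exact hg2 _ _ h3 h4
          · subst h; exact (hg2 _ _ h4 h3).symm
        rw [step1 _ _ _ A1 A1' k2 k1, step2 _ _ _ B1 B1' k3 k2]
      · rcases hcase with hcase | hcase
        · exfalso
          obtain ⟨q'', h1, h2⟩ := hcase hwF
          rw [hφ.injective h2] at h1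
          exact hq' ⟨Ioo_subset_Icc_self h1.1, Ioo_subset_Icc_self h1.2⟩
        · have : φ q' ∉ φ '' S := by
            rintro ⟨q'', h1, h2⟩
            rw [hφ.injective h2] at h1
            exact hq' h1
          rw [hG q hq]
          simp only [G, if_neg this]
          symm
          apply aux_ext g n (fun i j => ν i j ∉ K) hg1 hg2 hcase
          by_contra hcon
          push Not at hcon
          apply hq'
          have hq1 : q.1 ∈ Icc (0:ℝ) 1 := hq.1
          have hq2 : q.2 ∈ Icc (0:ℝ) 1 := hq.2
          have p1 : 0 < q.1 := by
            rcases hq1.1.eq_or_lt with h | h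
            · exact absurd (by rw [← h]; simp) hcon.1
            · exact h
          have p2 : 0 < q.2 := by
            rcases hq2.1.eq_or_lt with h | h
            · exact absurd (by rw [← h]; simp) hcon.2.1
            · exact h
          have p3 : q.1 < 1 := by
            rcases hq1.2.eq_or_lt with h | h
            · have := hcon.2.2.1; rw [h] at this; simp at this
            · exact h
          have p4 : q.2 < 1 := by
            rcases hq2.2.eq_or_lt with h | h
            · have := hcon.2.2.2; rw [h] at this; simp at this
            · exact h
          exact ⟨⟨(b3 p1).le, (b5 p3).le⟩, ⟨(b4 p2).le, (b6 p4).le⟩⟩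
    · have : (φ '' S)ᶜ ∈ 𝓝 z := hSc'.isOpen_compl.mem_nhds hzS
      filter_upwards [mem_nhdsWithin_of_mem_nhds this] with w hw
      simp only [G, if_neg hzS, if_neg hw]
  have := hF.constant hcont hpF hpF'
  rwa [hG p hp, hG p' hp'] at this

section dbl
variable {X : Type*} [MetricSpace X] [MeasurableSpace X] [BorelSpace X]

theorem aux_CD_one {μ : Measure X} {CD : ℝ≥0} (h : IsDoublingWith μ CD) (x : X) :
    (1 : ℝ≥0∞) ≤ CD := by
  have h1 := h.1 x 1 one_pos
  have h2 := h.2 x 1 one_pos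
  have h3 : μ (Metric.ball x 1) ≤ μ (Metric.ball x (2 * 1)) :=
    measure_mono (Metric.ball_subset_ball (by norm_num))
  have h4 : 1 * μ (Metric.ball x 1) ≤ CD * μ (Metric.ball x 1) := by
    rw [one_mul]; exact h3.trans h2
  exact (ENNReal.mul_le_mul_iff_left h1.1.ne' h1.2.ne).1 h4

theorem aux_dbl_pow {μ : Measure X} {CD : ℝ≥0} (h : IsDoublingWith μ CD) (x : X) (r : ℝ)
    (hr : 0 < r) (k : ℕ) :
    μ (Metric.ball x (2 ^ k * r)) ≤ (CD : ℝ≥0∞) ^ k * μ (Metric.ball x r) := by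
  induction k with
  | zero => simp
  | succ k ih =>
    have := h.2 x (2 ^ k * r) (by positivity)
    rw [← mul_assoc, ← pow_succ'] at this
    refine this.trans ?_
    rw [pow_succ', mul_assoc]
    gcongr

theorem aux_dist_val [ConnectedSpace X] (x z : X) (a : ℝ) (h0 : 0 ≤ a) (h : a ≤ dist x z) :
    ∃ w, dist x w = a := by
  have hc : Continuous fun w => dist x w := continuous_const.dist continuous_id
  have := intermediate_value_univ x z hc
  exact this ⟨by simpa using h0, h⟩

def auxTh (CD : ℝ≥0) : ℝ≥0∞ := (1 + ((CD : ℝ≥0∞) ^ 3)⁻¹)⁻¹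

theorem auxTh_lt (CD : ℝ≥0) : auxTh CD < 1 := by
  unfold auxTh
  rw [ENNReal.inv_lt_one]
  apply ENNReal.lt_add_right ENNReal.one_ne_top
  rw [ENNReal.inv_ne_zero]
  exact ENNReal.pow_ne_top ENNReal.coe_ne_top

theorem aux_rev [ConnectedSpace X] {μ : Measure X} {CD : ℝ≥0} (h : IsDoublingWith μ CD) (x z : X)
    (r : ℝ) (hr : 0 < r) (hz : r / 2 ≤ dist x z) :
    μ (Metric.ball x (r / 4)) ≤ auxTh CD * μ (Metric.ball x r) := by
  obtain ⟨w, hw⟩ := aux_dist_val x z (r / 2) (by positivity) hz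
  set a := μ (Metric.ball x (r / 4))
  set b := μ (Metric.ball w (r / 4))
  set M := μ (Metric.ball x r)
  have hab : a + b ≤ M := by
    rw [← measure_union _ Metric.isOpen_ball.measurableSet]
    · apply measure_mono
      intro u hu
      rcases hu with hu | hu <;> rw [Metric.mem_ball] at *
      · linarith
      · have := dist_triangle u w x
        rw [dist_comm w x] at this
        linarith
    · rw [Set.disjoint_left]
      intro u h1 h2
      rw [Metric.mem_ball] at *
      have := dist_triangle x u w
      rw [dist_comm x u] at this
      linarith
  have hMb : M ≤ (CD : ℝ≥0∞) ^ 3 * b := by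
    refine le_trans (measure_mono ?_) (aux_dbl_pow h w (r / 4) (by positivity) 3)
    intro u hu
    rw [Metric.mem_ball] at *
    have := dist_triangle u x w
    linarith
  have h1 : (CD : ℝ≥0∞) ^ 3 ≠ 0 := pow_ne_zero _ (zero_lt_one.trans_le (aux_CD_one h x)).ne'
  have h2 : (CD : ℝ≥0∞) ^ 3 ≠ ⊤ := ENNReal.pow_ne_top ENNReal.coe_ne_top
  have hb : ((CD : ℝ≥0∞) ^ 3)⁻¹ * a ≤ b := by
    rw [mul_comm, ← div_eq_mul_inv]
    apply ENNReal.div_le_of_le_mul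
    rw [mul_comm]
    exact (le_self_add.trans hab).trans hMb
  have hfin : (1 + ((CD : ℝ≥0∞) ^ 3)⁻¹) * a ≤ M := by
    rw [add_mul, one_mul]
    exact (add_le_add le_rfl hb).trans hab
  unfold auxTh
  rw [mul_comm, ← div_eq_mul_inv, ENNReal.le_div_iff_mul_le]
  · rwa [mul_comm]
  · left
    simp
  · left
    exact ENNReal.add_ne_top.2 ⟨by simp, ENNReal.inv_ne_top.2 h1⟩

theorem aux_rev_pow [ConnectedSpace X] {μ : Measure X} {CD : ℝ≥0} (h : IsDoublingWith μ CD)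
    (x z : X) (r : ℝ) (hr : 0 < r) (hz : r / 2 ≤ dist x z) (j : ℕ) :
    μ (Metric.ball x (r / 4 ^ j)) ≤ auxTh CD ^ j * μ (Metric.ball x r) := by
  induction j with
  | zero => simp
  | succ j ih =>
    have h1 : r / 4 ^ j ≤ r := div_le_self hr.le (one_le_pow₀ (by norm_num))
    have := aux_rev h x z (r / 4 ^ j) (by positivity) (by linarith)
    rw [pow_succ, ← div_div, pow_succ', mul_assoc]
    refine this.trans ?_
    gcongr

theorem aux_small [ConnectedSpace X] {μ : Measure X} {CD : ℝ≥0} (h : IsDoublingWith μ CD)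
    (x z : X) (hz : x ≠ z) (ε : ℝ≥0∞) (hε : 0 < ε) :
    ∃ r : ℝ, 0 < r ∧ μ (Metric.ball x r) ^ (1 / 2 : ℝ) ≤ ε := by
  have hd : 0 < dist x z := dist_pos.2 hz
  set R := dist x z
  have hlim : Tendsto (fun j : ℕ => auxTh CD ^ j * μ (Metric.ball x R)) atTop (𝓝 0) := by
    have h1 := ENNReal.tendsto_pow_atTop_nhds_zero_of_lt_one (auxTh_lt CD)
    have h2 := ENNReal.Tendsto.mul_const (b := μ (Metric.ball x R)) h1
      (Or.inr (h.1 x R hd).2.ne)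
    simpa using h2
  have hε2 : 0 < ε ^ (2:ℝ) := by
    rw [ENNReal.rpow_two]
    exact ENNReal.pow_pos hε 2
  obtain ⟨j, hj⟩ := (hlim.eventually (gt_mem_nhds hε2)).exists
  refine ⟨R / 4 ^ j, by positivity, ?_⟩
  have h3 := (aux_rev_pow h x z R hd (by linarith) j).trans hj.le
  have h4 := ENNReal.rpow_le_rpow h3 (show (0:ℝ) ≤ 1 / 2 by norm_num)
  rwa [← ENNReal.rpow_mul, show (2:ℝ) * (1 / 2) = 1 by norm_num, ENNReal.rpow_one] at h4

def auxCs (CD : ℝ≥0) : ℝ≥0∞ := (1 - auxTh CD ^ (1 / 2 : ℝ))⁻¹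

theorem auxCs_ne_top (CD : ℝ≥0) : auxCs CD ≠ ⊤ := by
  unfold auxCs
  rw [ENNReal.inv_ne_top]
  apply (tsub_pos_of_lt _).ne'
  exact ENNReal.rpow_lt_one (auxTh_lt CD) (by norm_num)

theorem aux_geo [ConnectedSpace X] {μ : Measure X} {CD : ℝ≥0} (h : IsDoublingWith μ CD)
    (x z : X) (r : ℝ) (hr : 0 < r) (hz : r / 2 ≤ dist x z) (J : ℕ) :
    ∑ j ∈ Finset.range J, μ (Metric.ball x (r / 4 ^ j)) ^ (1 / 2 : ℝ) ≤
      auxCs CD * μ (Metric.ball x r) ^ (1 / 2 : ℝ) := by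
  calc ∑ j ∈ Finset.range J, μ (Metric.ball x (r / 4 ^ j)) ^ (1 / 2 : ℝ)
      ≤ ∑ j ∈ Finset.range J, (auxTh CD ^ (1 / 2 : ℝ)) ^ j * μ (Metric.ball x r) ^ (1 / 2 : ℝ) := by
        refine Finset.sum_le_sum fun j _ => ?_
        have h4 := ENNReal.rpow_le_rpow (aux_rev_pow h x z r hr hz j)
          (show (0:ℝ) ≤ 1 / 2 by norm_num)
        rw [ENNReal.mul_rpow_of_nonneg _ _ (by norm_num)] at h4
        refine h4.trans (le_of_eq ?_)
        congr 1
        rw [← ENNReal.rpow_natCast, ← ENNReal.rpow_natCast, ← ENNReal.rpow_mul, ← ENNReal.rpow_mul,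
          mul_comm]
    _ = (∑ j ∈ Finset.range J, (auxTh CD ^ (1 / 2 : ℝ)) ^ j) * μ (Metric.ball x r) ^ (1 / 2 : ℝ) := by
        rw [Finset.sum_mul]
    _ ≤ _ := by
        gcongr
        unfold auxCs
        rw [← ENNReal.tsum_geometric]
        exact ENNReal.sum_le_tsum _

theorem aux_near {μ : Measure X} (hna : ∀ (a : X) (ε : ℝ≥0∞), 0 < ε →
      ∃ r : ℝ, 0 < r ∧ μ (Metric.ball a r) ^ (1 / 2 : ℝ) ≤ ε) (a : X) (ε : ℝ≥0∞) (hε : 0 < ε)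
    (δ : ℝ) (hδ : 0 < δ) :
    ∃ r : ℝ, 0 < r ∧ ∀ b, dist a b ≤ r → qDelta μ 2 δ a b ≤ ε := by
  obtain ⟨r, hr, h⟩ := hna a ε hε
  refine ⟨min δ (r / 2), by positivity, fun b hb => ?_⟩
  refine (aux_q_single μ 2 δ a b (hb.trans (min_le_left _ _))).trans (le_trans ?_ h)
  apply ENNReal.rpow_le_rpow _ (by norm_num)
  apply measure_mono
  refine (aux_pairBall_sub a b (r / 2) (hb.trans (min_le_right _ _))).trans ?_
  rw [show 2 * (r / 2) = r by ring]

theorem aux_W {μ : Measure X} {CD CW : ℝ≥0} (h : IsDoublingWith μ CD) (hw : IsWMDM μ 2 CW)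
    (hna : ∀ (a : X) (ε : ℝ≥0∞), 0 < ε →
      ∃ r : ℝ, 0 < r ∧ μ (Metric.ball a r) ^ (1 / 2 : ℝ) ≤ ε) (Q : Set X) (hQ : IsCompact Q)
    (σ : ℝ) (hσ : 0 < σ) :
    ∃ δ₀ : ℝ, 0 < δ₀ ∧ ∀ δ : ℝ, δ ≤ δ₀ → ∀ a ∈ Q, ∀ b ∈ Q, σ ≤ dist a b →
      μ (Metric.ball a σ) ^ (1 / 2 : ℝ) ≤ (CW * CD + 1 : ℝ≥0∞) * qDelta μ 2 δ a b := by
  by_contra hcon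
  push Not at hcon
  have hk : ∀ k : ℕ, ∃ a ∈ Q, ∃ b ∈ Q, σ ≤ dist a b ∧
      (CW * CD + 1 : ℝ≥0∞) * qDelta μ 2 (1 / ((k:ℝ) + 1)) a b <
        μ (Metric.ball a σ) ^ (1 / 2 : ℝ) := by
    intro k
    obtain ⟨δ, hδ, a, ha, b, hb, hab, hlt⟩ := hcon (1 / ((k:ℝ) + 1)) (by positivity)
    refine ⟨a, ha, b, hb, hab, lt_of_le_of_lt ?_ hlt⟩
    gcongr
    exact aux_q_anti μ 2 a b hδ
  choose a ha b hb hab hlt using hk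
  obtain ⟨a0, ha0, f, hf, hfa⟩ := hQ.tendsto_subseq ha
  obtain ⟨b0, hb0, f', hf', hfb⟩ := hQ.tendsto_subseq (fun k => hb (f k))
  have hfa' : Tendsto (fun k => a (f (f' k))) atTop (𝓝 a0) := hfa.comp hf'.tendsto_atTop
  have hfb' : Tendsto (fun k => b (f (f' k))) atTop (𝓝 b0) := hfb
  have hff : Tendsto (fun k => f (f' k)) atTop atTop := hf.tendsto_atTop.comp hf'.tendsto_atTop
  have hd : σ ≤ dist a0 b0 :=
    ge_of_tendsto' (hfa'.dist hfb') fun k => hab _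
  set C1 : ℝ≥0∞ := CW * CD + 1 with hC1
  have hC1t : C1 ≠ ⊤ := by
    rw [hC1]
    exact ENNReal.add_ne_top.2 ⟨ENNReal.mul_ne_top (by simp) (by simp), by simp⟩
  have hC10 : C1 ≠ 0 := by rw [hC1]; simp
  set m := μ (Metric.ball a0 σ) ^ (1 / 2 : ℝ) with hm
  have hm0 : m ≠ 0 := (ENNReal.rpow_pos (h.1 a0 σ hσ).1 (h.1 a0 σ hσ).2.ne).ne'
  have hmt : m ≠ ⊤ := ENNReal.rpow_ne_top_of_nonneg (by norm_num) (h.1 a0 σ hσ).2.ne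
  have hCD := aux_CD_one h a0
  have key : ∀ δ : ℝ, 0 < δ → C1 * qDelta μ 2 δ a0 b0 ≤ CD * m := by
    intro δ hδ
    apply ENNReal.le_of_forall_pos_le_add
    intro ε hε _
    have hε' : 0 < (ε : ℝ≥0∞) / (2 * C1) :=
      ENNReal.div_pos (by simpa using hε.ne') (ENNReal.mul_ne_top (by simp) hC1t)
    obtain ⟨r1, hr1, h1⟩ := aux_near hna a0 _ hε' δ hδ
    obtain ⟨r2, hr2, h2⟩ := aux_near hna b0 _ hε' δ hδ
    have e1 := hfa'.eventually (Metric.ball_mem_nhds a0 (show 0 < min r1 σ by positivity))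
    have e2 := hfb'.eventually (Metric.ball_mem_nhds b0 hr2)
    have e3 : ∀ᶠ k in atTop, 1 / ((f (f' k) : ℝ) + 1) ≤ δ := by
      have : Tendsto (fun k : ℕ => 1 / ((k : ℝ) + 1)) atTop (𝓝 0) :=
        tendsto_one_div_add_atTop_nhds_zero_nat
      filter_upwards [(this.comp hff).eventually (gt_mem_nhds hδ)] with k hk using hk.le
    obtain ⟨k, k1, k2, k3⟩ := (e1.and (e2.and e3)).exists
    set a' := a (f (f' k))
    set b' := b (f (f' k))
    change dist a' a0 < min r1 σ at k1
    change dist b' b0 < r2 at k2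
    have q1 := h1 a' (by rw [dist_comm]; exact k1.le.trans (min_le_left _ _))
    have q2 := h2 b' (by rw [dist_comm]; exact k2.le)
    rw [aux_q_symm] at q2
    have q3 : C1 * qDelta μ 2 δ a' b' ≤ CD * m := by
      calc C1 * qDelta μ 2 δ a' b' ≤ C1 * qDelta μ 2 (1 / ((f (f' k) : ℝ) + 1)) a' b' := by
            gcongr; exact aux_q_anti μ 2 _ _ k3
        _ ≤ μ (Metric.ball a' σ) ^ (1 / 2 : ℝ) := (hlt _).le
        _ ≤ (CD * μ (Metric.ball a0 σ)) ^ (1 / 2 : ℝ) := by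
            apply ENNReal.rpow_le_rpow _ (by norm_num)
            refine le_trans (measure_mono ?_) (h.2 a0 σ hσ)
            intro u hu
            rw [Metric.mem_ball] at *
            have := dist_triangle u a' a0
            have := k1.trans_le (min_le_right _ _)
            linarith
        _ = (CD:ℝ≥0∞) ^ (1 / 2 : ℝ) * m := by
            rw [ENNReal.mul_rpow_of_nonneg _ _ (by norm_num)]
        _ ≤ CD * m := by
            gcongr
            calc (CD:ℝ≥0∞) ^ (1 / 2 : ℝ) ≤ (CD:ℝ≥0∞) ^ (1 : ℝ) :=
                  ENNReal.rpow_le_rpow_of_exponent_le hCD (by norm_num)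
              _ = CD := ENNReal.rpow_one _
    calc C1 * qDelta μ 2 δ a0 b0
        ≤ C1 * (qDelta μ 2 δ a0 a' + (qDelta μ 2 δ a' b' + qDelta μ 2 δ b' b0)) := by
          gcongr
          refine (aux_q_tri μ 2 δ a0 a' b0).trans ?_
          gcongr
          exact aux_q_tri μ 2 δ a' b' b0
      _ ≤ C1 * ((ε : ℝ≥0∞) / (2 * C1) + (qDelta μ 2 δ a' b' + (ε : ℝ≥0∞) / (2 * C1))) := by
          gcongr
      _ = C1 * qDelta μ 2 δ a' b' + (2 * C1) * ((ε : ℝ≥0∞) / (2 * C1)) := by ring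
      _ = C1 * qDelta μ 2 δ a' b' + ε := by
          rw [ENNReal.mul_div_cancel (by simp [hC10]) (ENNReal.mul_ne_top (by simp) hC1t)]
      _ ≤ CD * m + ε := by gcongr
  have hq : qmu μ 2 a0 b0 ≤ CD * m / C1 := by
    refine aux_qmu_le μ 2 a0 b0 _ fun δ hδ => ?_
    rw [ENNReal.le_div_iff_mul_le (Or.inl hC10) (Or.inl hC1t), mul_comm]
    exact key δ hδ
  have hmq : m ≤ CW * qmu μ 2 a0 b0 := by
    refine le_trans ?_ (hw a0 b0)
    apply ENNReal.rpow_le_rpow _ (by norm_num)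
    apply measure_mono
    exact (Metric.ball_subset_ball hd).trans subset_union_left
  have : C1 * m ≤ (CW * CD) * m := by
    calc C1 * m ≤ C1 * (CW * (CD * m / C1)) := by gcongr; exact hmq.trans (by gcongr)
      _ = (CW * CD) * m * (C1 / C1) := by simp only [div_eq_mul_inv]; ring
      _ ≤ (CW * CD) * m * 1 := by gcongr; exact ENNReal.div_self_le_one
      _ = _ := mul_one _
  have := (ENNReal.mul_le_mul_iff_left hm0 hmt).1 this
  rw [hC1] at this
  have h3 : (CW * CD : ℝ≥0∞) < CW * CD + 1 :=
    ENNReal.lt_add_right (ENNReal.mul_ne_top (by simp) (by simp)) (by simp)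
  exact absurd this (not_le.2 h3)

end dbl

section graph
variable {X : Type*} [MetricSpace X]

theorem aux_net (Q : Set X) (hQ : IsCompact Q) (δ : ℝ) (hδ : 0 < δ) :
    ∃ N : Finset X, (∀ n ∈ N, n ∈ Q) ∧ (∀ a ∈ N, ∀ b ∈ N, a ≠ b → δ < dist a b) ∧
      ∀ z ∈ Q, ∃ n ∈ N, dist z n ≤ δ := by
  set e : ℝ≥0 := ⟨δ / 2, by positivity⟩ with he
  have he0 : e ≠ 0 := by
    intro h
    have : (e : ℝ) = 0 := by rw [h]; rfl
    have h2 : (e : ℝ) = δ / 2 := rfl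
    linarith
  have h2e : ((2 * e : ℝ≥0) : ℝ) = δ := by
    rw [NNReal.coe_mul]
    change 2 * (δ / 2) = δ
    ring
  have hpk : packingNumber (2 * e) Q ≠ ⊤ := by
    obtain ⟨N, hN1, hN2, hN3⟩ := exists_finite_isCover_of_isCompact he0 hQ
    have h1 := IsCover.externalCoveringNumber_le_encard hN3
    have h2 := packingNumber_two_mul_le_externalCoveringNumber e Q
    exact ((h2.trans h1).trans_lt hN2.encard_lt_top).ne
  have hfin : (maximalSeparatedSet (2 * e) Q).Finite := by
    rw [← Set.encard_ne_top_iff, encard_maximalSeparatedSet hpk]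
    exact hpk
  refine ⟨hfin.toFinset, ?_, ?_, ?_⟩
  · intro n hn
    exact maximalSeparatedSet_subset (hfin.mem_toFinset.1 hn)
  · intro a ha b hb hab
    have := isSeparated_maximalSeparatedSet (ε := 2 * e) (A := Q) (hfin.mem_toFinset.1 ha)
      (hfin.mem_toFinset.1 hb) hab
    change _ < edist a b at this
    rw [edist_nndist] at this
    have h3 : 2 * e < nndist a b := by exact_mod_cast this
    rw [← h2e]
    exact_mod_cast h3
  · intro z hz
    obtain ⟨n, hn, h⟩ := isCover_maximalSeparatedSet hpk hz
    refine ⟨n, hfin.mem_toFinset.2 hn, ?_⟩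
    change edist z n ≤ _ at h
    rw [edist_nndist] at h
    have h3 : nndist z n ≤ 2 * e := by exact_mod_cast h
    rw [← h2e]
    exact_mod_cast h3

def auxR (S : Finset X) (δ : ℝ) (u v : X) : Prop := u ∈ S ∧ v ∈ S ∧ dist u v ≤ δ

theorem auxR_symm (S : Finset X) (δ : ℝ) (u v : X) (h : auxR S δ u v) : auxR S δ v u := by
  exact ⟨h.2.1, h.1, by rw [dist_comm]; exact h.2.2⟩

open Classical in
theorem aux_first (S : Finset X) (δ : ℝ) (a b : X)
    (h : Relation.ReflTransGen (auxR S δ) a b) :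
    b = a ∨ ∃ c ∈ S.erase a, dist a c ≤ δ ∧ Relation.ReflTransGen (auxR (S.erase a) δ) c b := by
  induction h with
  | refl => left; rfl
  | tail h1 h2 ih =>
    rename_i b b'
    by_cases hb' : b' = a
    · left; exact hb'
    right
    have hb'S : b' ∈ S.erase a := Finset.mem_erase.2 ⟨hb', h2.2.1⟩
    rcases ih with rfl | ⟨c, hc, hac, hcb⟩
    · exact ⟨b', hb'S, h2.2.2, .refl⟩
    · by_cases hb : b = a
      · subst hb
        exact ⟨b', hb'S, h2.2.2, .refl⟩
      · exact ⟨c, hc, hac, hcb.tail ⟨Finset.mem_erase.2 ⟨hb, h2.1⟩, hb'S, h2.2.2⟩⟩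

open Classical in
theorem aux_path [MeasurableSpace X] (μ : Measure X) (w : X → ℝ≥0∞) (δ : ℝ) (b : X) (n : ℕ) :
    ∀ S : Finset X, S.card = n →
      (∀ u ∈ S, ∀ v ∈ S, dist u v ≤ δ → qDelta μ 2 δ u v ≤ w v) →
      ∀ a ∈ S, Relation.ReflTransGen (auxR S δ) a b →
        qDelta μ 2 δ a b ≤ ∑ v ∈ S.erase a, w v := by
  induction n with
  | zero =>
    intro S hS _ a ha
    rw [Finset.card_eq_zero] at hS
    subst hS
    simp at ha
  | succ n ih =>
    intro S hS hw a ha h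
    rcases aux_first S δ a b h with rfl | ⟨c, hc, hac, hcb⟩
    · rw [aux_q_self]; exact zero_le
    · have hcS := (Finset.mem_erase.1 hc).2
      have h1 := ih (S.erase a) (by rw [Finset.card_erase_of_mem ha, hS]; rfl)
        (fun u hu v hv => hw u (Finset.mem_erase.1 hu).2 v (Finset.mem_erase.1 hv).2) c hc hcb
      calc qDelta μ 2 δ a b ≤ qDelta μ 2 δ a c + qDelta μ 2 δ c b := aux_q_tri μ 2 δ a c b
        _ ≤ w c + ∑ v ∈ (S.erase a).erase c, w v := add_le_add (hw a ha c hcS hac) h1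
        _ = _ := Finset.add_sum_erase _ _ hc

open Classical in
theorem aux_local (S : Finset X) (δ ρ : ℝ) (hδ : 0 ≤ δ) (hρ : 0 < ρ) (a b : X) (ha : a ∈ S)
    (h : Relation.ReflTransGen (auxR S δ) a b) (hab : ρ ≤ dist a b) :
    ∃ b' ∈ S, ρ ≤ dist a b' ∧
      Relation.ReflTransGen (auxR (S.filter fun v => dist a v ≤ ρ + δ) δ) a b' := by
  have key : (∃ b' ∈ S, ρ ≤ dist a b' ∧
      Relation.ReflTransGen (auxR (S.filter fun v => dist a v ≤ ρ + δ) δ) a b') ∨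
      (b ∈ S ∧ dist a b < ρ ∧
        Relation.ReflTransGen (auxR (S.filter fun v => dist a v ≤ ρ + δ) δ) a b) := by
    clear hab
    induction h with
    | refl => right; exact ⟨ha, by simpa using hρ, .refl⟩
    | tail h1 h2 ih =>
      rename_i b b'
      rcases ih with ih | ⟨hbS, hb, hab⟩
      · left; exact ih
      have ht := dist_triangle a b b'
      have hR : auxR (S.filter fun v => dist a v ≤ ρ + δ) δ b b' :=
        ⟨Finset.mem_filter.2 ⟨hbS, by linarith⟩,
          Finset.mem_filter.2 ⟨h2.2.1, by linarith [h2.2.2]⟩, h2.2.2⟩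
      by_cases hb' : ρ ≤ dist a b'
      · left; exact ⟨b', h2.2.1, hb', hab.tail hR⟩
      · right; exact ⟨h2.2.1, not_le.1 hb', hab.tail hR⟩
  rcases key with key | ⟨_, h2, _⟩
  · exact key
  · exact absurd hab (not_le.2 h2)

open Classical in
def auxH (N : Finset X) (u w : X → ℝ≥0∞) (t : ℝ) : ℝ≥0∞ :=
  ∑ n ∈ N, if ENNReal.ofReal t ≤ u n ∧ u n ≤ ENNReal.ofReal t + w n then w n else 0

theorem aux_coarea (N : Finset X) (u w : X → ℝ≥0∞) (hw : ∀ n ∈ N, w n ≠ ⊤) (α : ℝ≥0∞) :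
    α * volume {t : ℝ | 0 < t ∧ α ≤ auxH N u w t} ≤ ∑ n ∈ N, w n * w n := by
  classical
  have hms : ∀ n, MeasurableSet {t : ℝ | ENNReal.ofReal t ≤ u n ∧ u n ≤ ENNReal.ofReal t + w n} := by
    intro n
    apply MeasurableSet.inter
    · exact measurableSet_le ENNReal.measurable_ofReal measurable_const
    · exact measurableSet_le measurable_const (ENNReal.measurable_ofReal.add_const _)
  have hm1 : ∀ n, Measurable fun t : ℝ =>
      if ENNReal.ofReal t ≤ u n ∧ u n ≤ ENNReal.ofReal t + w n then w n else 0 := by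
    intro n
    exact Measurable.ite (hms n) measurable_const measurable_const
  have hm : Measurable (auxH N u w) := by
    unfold auxH
    exact Finset.measurable_fun_sum _ fun n _ => hm1 n
  have h1 := mul_meas_ge_le_lintegral (μ := volume.restrict (Ioi (0:ℝ))) hm α
  have h2 : volume {t : ℝ | 0 < t ∧ α ≤ auxH N u w t} ≤
      volume.restrict (Ioi (0:ℝ)) {t | α ≤ auxH N u w t} := by
    rw [Measure.restrict_apply (measurableSet_le measurable_const hm)]
    apply measure_mono
    rintro t ⟨ht, ht'⟩
    exact ⟨ht', ht⟩
  refine (mul_le_mul_right h2 α).trans (h1.trans ?_)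
  unfold auxH
  rw [lintegral_finsetSum _ fun n _ => hm1 n]
  refine Finset.sum_le_sum fun n hn => ?_
  have h3 : (fun t : ℝ => if ENNReal.ofReal t ≤ u n ∧ u n ≤ ENNReal.ofReal t + w n then w n else 0)
      = Set.indicator {t : ℝ | ENNReal.ofReal t ≤ u n ∧ u n ≤ ENNReal.ofReal t + w n}
        fun _ => w n := by
    funext t
    simp [Set.indicator]
  rw [h3, lintegral_indicator_const (hms n), Measure.restrict_apply (hms n)]
  gcongr
  by_cases hu : u n = ⊤
  · have : {t : ℝ | ENNReal.ofReal t ≤ u n ∧ u n ≤ ENNReal.ofReal t + w n} = ∅ := by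
      ext t
      simp [hu, hw n hn]
    simp [this]
  calc volume ({t : ℝ | ENNReal.ofReal t ≤ u n ∧ u n ≤ ENNReal.ofReal t + w n} ∩ Ioi 0)
      ≤ volume (Icc ((u n).toReal - (w n).toReal) (u n).toReal) := by
        apply measure_mono
        rintro t ⟨⟨h1, h2⟩, ht⟩
        have ht' : 0 ≤ t := le_of_lt ht
        constructor
        · have := ENNReal.toReal_mono (ENNReal.add_ne_top.2 ⟨ENNReal.ofReal_ne_top, hw n hn⟩) h2
          rw [ENNReal.toReal_add ENNReal.ofReal_ne_top (hw n hn), ENNReal.toReal_ofReal ht'] at this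
          linarith
        · have := ENNReal.toReal_mono hu h1
          rwa [ENNReal.toReal_ofReal ht'] at this
    _ = w n := by
        rw [Real.volume_Icc, _root_.sub_sub_cancel, ENNReal.ofReal_toReal (hw n hn)]

def auxw [MeasurableSpace X] (μ : Measure X) (CD : ℝ≥0) (δ : ℝ) (v : X) : ℝ≥0∞ :=
  ((CD : ℝ≥0∞) ^ 4 * μ (Metric.ball v (δ / 2))) ^ (1 / 2 : ℝ)

variable [MeasurableSpace X] [BorelSpace X]

theorem auxw_ne_top {μ : Measure X} {CD : ℝ≥0} (h : IsDoublingWith μ CD) (δ : ℝ) (hδ : 0 < δ)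
    (v : X) : auxw μ CD δ v ≠ ⊤ := by
  apply ENNReal.rpow_ne_top_of_nonneg (by norm_num)
  exact ENNReal.mul_ne_top (ENNReal.pow_ne_top ENNReal.coe_ne_top) (h.1 v _ (by positivity)).2.ne

theorem auxw_q {μ : Measure X} {CD : ℝ≥0} (h : IsDoublingWith μ CD) (δ : ℝ) (hδ : 0 < δ)
    (a v : X) (hav : dist a v ≤ 3 * δ) : qDelta μ 2 (3 * δ) a v ≤ auxw μ CD δ v := by
  refine (aux_q_single μ 2 (3 * δ) a v hav).trans ?_
  apply ENNReal.rpow_le_rpow _ (by norm_num)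
  refine le_trans (measure_mono ?_) (aux_dbl_pow h v (δ / 2) (by positivity) 4)
  rw [aux_pairBall_comm]
  refine (aux_pairBall_sub v a (3 * δ) (by rwa [dist_comm])).trans ?_
  apply Metric.ball_subset_ball
  linarith

theorem aux_sq (m : ℝ≥0∞) : m ^ (1 / 2 : ℝ) * m ^ (1 / 2 : ℝ) = m := by
  rw [← ENNReal.rpow_add_of_nonneg _ _ (by norm_num) (by norm_num)]
  norm_num

open Classical in
theorem auxw_sum {μ : Measure X} {CD : ℝ≥0} (δ : ℝ) (N : Finset X)
    (hN : ∀ a ∈ N, ∀ b ∈ N, a ≠ b → δ < dist a b) (c : X) (r : ℝ) :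
    ∑ n ∈ N.filter (fun v => dist v c < r), auxw μ CD δ n * auxw μ CD δ n ≤
      (CD : ℝ≥0∞) ^ 4 * μ (Metric.ball c (r + δ / 2)) := by
  simp only [auxw, aux_sq]
  rw [← Finset.mul_sum]
  gcongr
  rw [← measure_biUnion_finset]
  · apply measure_mono
    intro z hz
    simp only [Set.mem_iUnion, Finset.mem_filter] at hz
    obtain ⟨n, ⟨_, hn⟩, hz⟩ := hz
    rw [Metric.mem_ball] at *
    linarith [dist_triangle z n c]
  · intro a ha b hb hab
    have ha := (Finset.mem_filter.1 ha).1
    have hb := (Finset.mem_filter.1 hb).1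
    have := hN a ha b hb hab
    apply Metric.ball_disjoint_ball
    linarith
  · intro b _
    exact Metric.isOpen_ball.measurableSet

open Classical in
theorem aux_level {μ : Measure X} {CD : ℝ≥0} (h : IsDoublingWith μ CD) (δ : ℝ) (hδ : 0 < δ)
    (N : Finset X) (hN : ∀ a ∈ N, ∀ b ∈ N, a ≠ b → δ < dist a b) (u : X → ℝ≥0∞) (c : X) (r : ℝ)
    (hr : 0 < r) (C : ℝ≥0∞) (hC0 : C ≠ 0) (hC : C ≠ ⊤) (m : ℝ≥0∞)
    (hm : m = μ (Metric.ball c (r + δ / 2)) ^ (1 / 2 : ℝ)) :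
    volume {t : ℝ | 0 < t ∧
      m ≤ C * auxH (N.filter (fun v => dist v c < r)) u (auxw μ CD δ) t} ≤
      C * (CD : ℝ≥0∞) ^ 4 * m := by
  have h0 : m ≠ 0 := by
    rw [hm]
    have := h.1 c (r + δ / 2) (by positivity)
    exact (ENNReal.rpow_pos this.1 this.2.ne).ne'
  have ht : m ≠ ⊤ := by
    rw [hm]
    have := h.1 c (r + δ / 2) (by positivity)
    exact ENNReal.rpow_ne_top_of_nonneg (by norm_num) this.2.ne
  have h1 := aux_coarea (N.filter (fun v => dist v c < r)) u (auxw μ CD δ)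
    (fun n _ => auxw_ne_top h δ hδ n) (m / C)
  have h2 := h1.trans (auxw_sum δ N hN c r)
  rw [← aux_sq (μ (Metric.ball c (r + δ / 2))), ← hm] at h2
  set V := volume {t : ℝ | 0 < t ∧
      m / C ≤ auxH (N.filter (fun v => dist v c < r)) u (auxw μ CD δ) t} with hV
  have h3 : volume {t : ℝ | 0 < t ∧
      m ≤ C * auxH (N.filter (fun v => dist v c < r)) u (auxw μ CD δ) t} ≤ V := by
    apply measure_mono
    rintro t ⟨ht, ht'⟩
    refine ⟨ht, ?_⟩
    apply ENNReal.div_le_of_le_mul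
    rwa [mul_comm]
  refine h3.trans ?_
  have h4 : m * V ≤ m * (C * (CD : ℝ≥0∞) ^ 4 * m) := by
    calc m * V = C * (m / C * V) := by
          rw [← mul_assoc, ENNReal.mul_div_cancel hC0 hC]
      _ ≤ C * ((CD : ℝ≥0∞) ^ 4 * (m * m)) := by gcongr
      _ = _ := by ring
  exact (ENNReal.mul_le_mul_iff_right h0 ht).1 h4

end graph

theorem aux_mesh {X : Type*} [MetricSpace X] (φ : ℝ × ℝ → X) (hφ : Continuous φ) (δ : ℝ)
    (hδ : 0 < δ) : ∃ n : ℕ, 0 < n ∧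
    ∀ p ∈ Icc (0:ℝ) 1 ×ˢ Icc (0:ℝ) 1, ∀ p' ∈ Icc (0:ℝ) 1 ×ˢ Icc (0:ℝ) 1,
      |p.1 - p'.1| ≤ 2 / n → |p.2 - p'.2| ≤ 2 / n → dist (φ p) (φ p') < δ := by
  have hc : IsCompact (Icc (0:ℝ) 1 ×ˢ Icc (0:ℝ) 1) := isCompact_Icc.prod isCompact_Icc
  have hu := hc.uniformContinuousOn_of_continuous hφ.continuousOn
  rw [Metric.uniformContinuousOn_iff] at hu
  obtain ⟨η, hη, h⟩ := hu δ hδ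
  obtain ⟨n, hn⟩ := exists_nat_gt (2 / η)
  have hn0 : (0:ℝ) < n := lt_trans (by positivity) hn
  refine ⟨n, by exact_mod_cast hn0, fun p hp p' hp' h1 h2 => h p hp p' hp' ?_⟩
  have h3 : 2 / (n:ℝ) < η := by
    rw [div_lt_iff₀ hn0]
    rw [div_lt_iff₀ hη] at hn
    linarith
  rw [Prod.dist_eq, Real.dist_eq, Real.dist_eq]
  exact max_lt (h1.trans_lt h3) (h2.trans_lt h3)

theorem aux_step (n i i' i₀ : ℕ) (hn : 0 < n) (h1 : i₀ ≤ i) (h2 : i ≤ i₀ + 1) (h3 : i₀ ≤ i')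
    (h4 : i' ≤ i₀ + 1) : |auxCl ((i:ℝ) / n) - auxCl ((i':ℝ) / n)| ≤ 2 / n := by
  have hn' : (0:ℝ) < n := by exact_mod_cast hn
  refine (auxCl_lip _ _).trans ?_
  rw [← sub_div, abs_div, abs_of_pos hn']
  gcongr
  have a1 : (i₀:ℝ) ≤ i := by exact_mod_cast h1
  have a2 : (i:ℝ) ≤ i₀ + 1 := by exact_mod_cast h2
  have a3 : (i₀:ℝ) ≤ i' := by exact_mod_cast h3
  have a4 : (i':ℝ) ≤ i₀ + 1 := by exact_mod_cast h4
  rw [abs_le]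
  constructor <;> linarith

theorem aux_edge (n i : ℕ) (hn : 0 < n) (h : i = 0 ∨ n ≤ i) : auxCl ((i:ℝ) / n) ∉ Ioo (0:ℝ) 1 := by
  have hn' : (0:ℝ) < n := by exact_mod_cast hn
  rcases h with rfl | h
  · simp [auxCl]
  · have : (1:ℝ) ≤ i / n := by
      rw [le_div_iff₀ hn', one_mul]; exact_mod_cast h
    unfold auxCl
    rw [min_eq_right this]
    simp

theorem aux_sep {X : Type*} [MetricSpace X] (φ : ℝ × ℝ → X) (hφ : IsOpenEmbedding φ)
    (δ : ℝ) (hδ : 0 < δ) (N B : Finset X) 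
    (hN : ∀ z ∈ φ '' (Icc (0:ℝ) 1 ×ˢ Icc (0:ℝ) 1), ∃ n ∈ N, dist z n ≤ δ)
    (A : X → Prop)
    (hA : ∀ v ∈ N, ∀ v' ∈ N, dist v v' ≤ 3 * δ → v ∉ B → v' ∉ B → A v → A v')
    (p p' : ℝ × ℝ) (hp : p ∈ Icc (0:ℝ) 1 ×ˢ Icc (0:ℝ) 1)
    (hp' : p' ∈ Icc (0:ℝ) 1 ×ˢ Icc (0:ℝ) 1)
    (hAp : ∀ v ∈ N, dist (φ p) v ≤ 2 * δ → A v) (hAp' : ∀ v ∈ N, dist (φ p') v ≤ 2 * δ → ¬ A v) :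
    ∃ a ∈ B, ∀ F : Set X, IsPreconnected F → φ p ∈ F → φ p' ∈ F →
      (∀ z ∈ F, ∀ k, Relation.ReflTransGen (auxR B (3 * δ)) a k → 3 * δ ≤ dist z k) →
      (F ⊆ φ '' (Ioo (0:ℝ) 1 ×ˢ Ioo (0:ℝ) 1) ∨
        ∀ z ∈ Icc (0:ℝ) 1 ×ˢ Icc (0:ℝ) 1, z ∉ Ioo (0:ℝ) 1 ×ˢ Ioo (0:ℝ) 1 →
          ∀ k, Relation.ReflTransGen (auxR B (3 * δ)) a k → δ < dist (φ z) k) → False := by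
  classical
  obtain ⟨n, hn0, hn⟩ := aux_mesh φ hφ.continuous δ hδ
  have hν' : ∀ i j : ℕ, ∃ v ∈ N, dist (φ (auxCl (i / n), auxCl (j / n))) v ≤ δ := fun i j =>
    hN _ ⟨_, ⟨auxCl_mem _, auxCl_mem _⟩, rfl⟩
  choose ν hνN hν using hν'
  have hadj : ∀ i j i' j' i₀ j₀ : ℕ, i₀ ≤ i → i ≤ i₀ + 1 → i₀ ≤ i' → i' ≤ i₀ + 1 →
      j₀ ≤ j → j ≤ j₀ + 1 → j₀ ≤ j' → j' ≤ j₀ + 1 → dist (ν i j) (ν i' j') ≤ 3 * δ := by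
    intro i j i' j' i₀ j₀ a1 a2 a3 a4 a5 a6 a7 a8
    have h1 := hn (auxCl (i / n), auxCl (j / n)) ⟨auxCl_mem _, auxCl_mem _⟩
      (auxCl (i' / n), auxCl (j' / n)) ⟨auxCl_mem _, auxCl_mem _⟩
      (aux_step n i i' i₀ hn0 a1 a2 a3 a4) (aux_step n j j' j₀ hn0 a5 a6 a7 a8)
    have h2 := hν i j
    have h3 := hν i' j'
    rw [dist_comm] at h2
    have := dist_triangle4 (ν i j) (φ (auxCl (i / n), auxCl (j / n)))
      (φ (auxCl (i' / n), auxCl (j' / n))) (ν i' j')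
    linarith
  have hgrid : ∀ p ∈ Icc (0:ℝ) 1 ×ˢ Icc (0:ℝ) 1,
      dist (φ p) (ν ⌊n * p.1⌋₊ ⌊n * p.2⌋₊) ≤ 2 * δ := by
    intro p hp
    obtain ⟨-, b1, b2⟩ := aux_floor_near n p.1 p.1 hp.1 hp.1 (by simp) hn0
    obtain ⟨-, b3, b4⟩ := aux_floor_near n p.2 p.2 hp.2 hp.2 (by simp) hn0
    have h1 := hν ⌊n * p.1⌋₊ ⌊n * p.2⌋₊
    rw [auxCl_of_mem b1, auxCl_of_mem b3] at h1
    have h2 := hn p hp (_, _) ⟨b1, b3⟩ (by rw [abs_sub_comm]; exact b2)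
      (by rw [abs_sub_comm]; exact b4)
    have := dist_triangle (φ p) (φ ((⌊n * p.1⌋₊ : ℝ) / n, (⌊n * p.2⌋₊ : ℝ) / n))
      (ν ⌊n * p.1⌋₊ ⌊n * p.2⌋₊)
    linarith
  let st : Setoid ↥B := ⟨fun u v => Relation.ReflTransGen (auxR B (3 * δ)) u v,
    fun _ => .refl, fun {u v} h => by
      have : Std.Symm (auxR B (3 * δ)) := ⟨auxR_symm B (3 * δ)⟩
      exact symm h,
    fun h1 h2 => h1.trans h2⟩
  let c : ℕ → ℕ → Option (Quotient st) := fun i j =>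
    if h : ν i j ∈ B then some (Quotient.mk st ⟨ν i j, h⟩) else none
  let f : ℕ → ℕ → ℤ := fun i j => if A (ν i j) then 1 else 0
  have hcn : ∀ i j, c i j = none → ν i j ∉ B := by
    intro i j h hB
    simp [c, hB] at h
  have hff : ∀ i j i' j', dist (ν i j) (ν i' j') ≤ 3 * δ → c i j = none → c i' j' = none →
      f i' j' = f i j := by
    intro i j i' j' hd h1 h2
    have e1 := hcn _ _ h1
    have e2 := hcn _ _ h2
    have : A (ν i' j') ↔ A (ν i j) :=
      ⟨hA _ (hνN _ _) _ (hνN _ _) (by rwa [dist_comm]) e2 e1, hA _ (hνN _ _) _ (hνN _ _) hd e1 e2⟩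
    simp only [f, this]
  obtain ⟨a, g, hg1, hg2, hg⟩ := aux_J c (by
      intro i j i' j' i₀ j₀ a b a1 a2 a3 a4 a5 a6 a7 a8 h1 h2
      have hd := hadj i j i' j' i₀ j₀ a1 a2 a3 a4 a5 a6 a7 a8
      simp only [c] at h1 h2
      split_ifs at h1 h2 with e1 e2
      rw [Option.some.injEq] at h1 h2
      rw [← h1, ← h2]
      apply Quotient.sound
      exact .single ⟨e1, e2, hd⟩) f
    (fun i j => hff _ _ _ _ (hadj i j (i + 1) j i j le_rfl (by lia) (by lia) le_rfl le_rfl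
      (by lia) le_rfl (by lia)))
    (fun i j => hff _ _ _ _ (hadj i j i (j + 1) i j le_rfl (by lia) le_rfl (by lia) le_rfl
      (by lia) (by lia) le_rfl))
    (⌊n * p.1⌋₊, ⌊n * p.2⌋₊) (⌊n * p'.1⌋₊, ⌊n * p'.2⌋₊) (by
      have e1 := hAp _ (hνN _ _) (hgrid p hp)
      have e2 := hAp' _ (hνN _ _) (hgrid p' hp')
      simp [f, e1, e2])
  induction a using Quotient.inductionOn with
  | h a =>
  refine ⟨a, a.2, fun F hF hpF hpF' hFK hcase => hg ?_⟩
  have hK : ∀ i j, ν i j ∉ {k | Relation.ReflTransGen (auxR B (3 * δ)) a k} →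
      c i j ≠ some (Quotient.mk st a) := by
    intro i j h1 h2
    simp only [c] at h2
    split_ifs at h2 with e1
    rw [Option.some.injEq] at h2
    exact h1 (Quotient.exact h2.symm)
  refine aux_G φ hφ n hn0 δ hn ν hν {k | Relation.ReflTransGen (auxR B (3 * δ)) a k} g
    (fun i j h1 h2 => hg1 i j (hK _ _ h1) (hK _ _ h2))
    (fun i j h1 h2 => hg2 i j (hK _ _ h1) (hK _ _ h2)) F hF hFK ?_ p p' hp hp' hpF hpF'
  rcases hcase with h | h
  · left; exact h
  right
  intro i j hij hmem
  refine absurd (hν i j) (not_le.2 (h _ ⟨auxCl_mem _, auxCl_mem _⟩ ?_ _ hmem))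
  rintro ⟨h1, h2⟩
  rcases hij with hij | hij | hij | hij
  · exact aux_edge n i hn0 (Or.inl hij) h1
  · exact aux_edge n j hn0 (Or.inl hij) h2
  · exact aux_edge n i hn0 (Or.inr hij) h1
  · exact aux_edge n j hn0 (Or.inr hij) h2

theorem aux_RB {X : Type*} [MetricSpace X] (B : Finset X) (δ : ℝ) (a k : X) (ha : a ∈ B)
    (h : Relation.ReflTransGen (auxR B δ) a k) : k ∈ B := by
  induction h with
  | refl => exact ha
  | tail _ h _ => exact h.2.1

theorem aux_scale {X : Type*} [MetricSpace X] (lam : ℝ) (hlam : 1 ≤ lam) (hLLC : IsLLC X lam)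
    (φ : ℝ × ℝ → X) (hφ : IsOpenEmbedding φ) (p p' : ℝ × ℝ)
    (hp : p ∈ Icc (0:ℝ) 1 ×ˢ Icc (0:ℝ) 1) (hp' : p' ∈ Icc (0:ℝ) 1 ×ˢ Icc (0:ℝ) 1)
    (x y : X) (hx : φ p = x) (hy : φ p' = y) (ρ R0 : ℝ) (hρ : dist x y = ρ) (hρ0 : 0 < ρ)
    (hR0 : 5 * lam * ρ ≤ R0) (hball : Metric.ball x R0 ⊆ φ '' (Ioo (0:ℝ) 1 ×ˢ Ioo (0:ℝ) 1))
    (s0 : ℝ) (hs0 : 0 < s0) (J : ℕ) (hJ : ρ / 4 ^ J ≤ s0 / (4 * lam))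
    (δ : ℝ) (hδ : 0 < δ) (hδ1 : 3 * δ ≤ s0 / (4 * lam)) (hδ2 : 3 * δ < ρ / 4 ^ J)
    (N B : Finset X)
    (hN : ∀ z ∈ φ '' (Icc (0:ℝ) 1 ×ˢ Icc (0:ℝ) 1), ∃ n ∈ N, dist z n ≤ δ)
    (A : X → Prop)
    (hA : ∀ v ∈ N, ∀ v' ∈ N, dist v v' ≤ 3 * δ → v ∉ B → v' ∉ B → A v → A v')
    (hAp : ∀ v ∈ N, dist x v ≤ 2 * δ → A v) (hAp' : ∀ v ∈ N, dist y v ≤ 2 * δ → ¬ A v)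
    (hBx : ∀ v ∈ B, s0 ≤ dist v x) (hBy : ∀ v ∈ B, s0 ≤ dist v y) :
    ∃ j ≤ J, ∃ c, (c = x ∨ c = y) ∧ ∃ k ∈ B, ∃ b,
      Relation.ReflTransGen (auxR B (3 * δ)) k b ∧ ρ / 4 ^ j ≤ dist k b ∧
      dist k c < 8 * lam * (ρ / 4 ^ j) := by
  have hJρ : ρ / 4 ^ J ≤ ρ := div_le_self hρ0.le (one_le_pow₀ (by norm_num))
  have hlρ : ρ ≤ lam * ρ := by nlinarith
  have hlam0 : 0 < lam := by linarith
  obtain ⟨a, haB, hsep⟩ := aux_sep φ hφ δ hδ N B hN A hA p p' hp hp' (by rwa [hx]) (by rwa [hy])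
  rw [hx, hy] at hsep
  have hex : ∃ k, Relation.ReflTransGen (auxR B (3 * δ)) a k ∧ dist x k < 3 * lam * ρ := by
    by_contra hcon
    push Not at hcon
    obtain ⟨F, hF, hFb, hxF, hyF⟩ := (hLLC x (2 * ρ) (by positivity)).1 x
      (Metric.mem_ball_self (by positivity)) y (by rw [Metric.mem_ball, dist_comm]; linarith)
    refine hsep F hF.2.isPreconnected hxF hyF ?_ (Or.inl (hFb.trans
      ((Metric.ball_subset_ball (by nlinarith)).trans hball)))
    intro z hz k hk
    have h1 := hFb hz
    rw [Metric.mem_ball] at h1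
    have h2 := hcon k hk
    have := dist_triangle x z k
    rw [dist_comm x z] at this
    nlinarith
  obtain ⟨k, hak, hxk⟩ := hex
  have hsy : Std.Symm (auxR B (3 * δ)) := ⟨auxR_symm B (3 * δ)⟩
  have hka : Relation.ReflTransGen (auxR B (3 * δ)) k a := symm hak
  have hkB := aux_RB B _ a k haB hak
  have hfin : {b | Relation.ReflTransGen (auxR B (3 * δ)) k b}.Finite :=
    B.finite_toSet.subset fun b hb => aux_RB B _ k b hkB hb
  obtain ⟨b, hkb, hmax⟩ := Set.exists_max_image _ (fun b => dist k b) hfin ⟨k, .refl⟩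
  replace hmax : ∀ b', Relation.ReflTransGen (auxR B (3 * δ)) k b' → dist k b' ≤ dist k b := hmax
  by_cases hD : ρ ≤ dist k b
  · refine ⟨0, Nat.zero_le _, x, Or.inl rfl, k, hkB, b, hkb, by simpa using hD, ?_⟩
    rw [dist_comm]
    simp
    nlinarith
  push Not at hD
  set D := dist k b with hDdef
  set D' := max D (s0 / (4 * lam)) with hD'
  have hs0l : 0 < s0 / (4 * lam) := by positivity
  have hD0 : 0 < D' := lt_max_of_lt_right hs0l
  have hor : dist k x < 2 * lam * D' ∨ dist k y < 2 * lam * D' := by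
    by_contra hcon
    push Not at hcon
    obtain ⟨F, hF, hFb, hxF, hyF⟩ := (hLLC k (2 * lam * D') (by positivity)).2 x y
      (by rw [Metric.mem_ball, dist_comm]; exact not_lt.2 hcon.1)
      (by rw [Metric.mem_ball, dist_comm]; exact not_lt.2 hcon.2)
    refine hsep F hF.2.isPreconnected hxF hyF ?_ (Or.inr ?_)
    · intro z hz k' hk'
      have h1 := hFb hz
      rw [Set.mem_compl_iff, Metric.mem_ball, not_lt,
        show 2 * lam * D' / lam = 2 * D' by field_simp] at h1
      have h2 := hmax k' (hka.trans hk')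
      have := dist_triangle z k' k
      rw [dist_comm k' k] at this
      have h3 : D ≤ D' := le_max_left _ _
      have h4 : s0 / (4 * lam) ≤ D' := le_max_right _ _
      linarith
    · intro z hz hz' k' hk'
      have h2 := hmax k' (hka.trans hk')
      have h5 : φ z ∉ Metric.ball x R0 := by
        intro h
        obtain ⟨z', hz1, hz2⟩ := hball h
        rw [hφ.injective hz2] at hz1
        exact hz' hz1
      rw [Metric.mem_ball, not_lt] at h5
      have h6 := dist_triangle4 (φ z) k' k x
      rw [dist_comm k' k, dist_comm k x] at h6
      nlinarith
  have hDs : s0 / (4 * lam) ≤ D := by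
    by_contra hcon
    push Not at hcon
    have : D' = s0 / (4 * lam) := max_eq_right hcon.le
    have h7 : 2 * lam * D' = s0 / 2 := by rw [this]; field_simp; norm_num
    rw [h7] at hor
    have := hBx k hkB
    have := hBy k hkB
    rcases hor with h | h <;> linarith
  rw [hD', max_eq_left hDs] at hor
  have hexj : ∃ j : ℕ, ρ / 4 ^ j ≤ D := ⟨J, hJ.trans hDs⟩
  classical
  set j := Nat.find hexj with hj
  have hj1 : ρ / 4 ^ j ≤ D := Nat.find_spec hexj
  have hjJ : j ≤ J := Nat.find_min' hexj (hJ.trans hDs)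
  have hj0 : j ≠ 0 := by
    intro h
    rw [h] at hj1
    simp at hj1
    linarith
  obtain ⟨i, hi⟩ := Nat.exists_eq_succ_of_ne_zero hj0
  have hj2 : D < 4 * (ρ / 4 ^ j) := by
    have := Nat.find_min hexj (m := i) (by rw [← hj]; lia)
    push Not at this
    rw [hi, Nat.succ_eq_add_one, pow_succ]
    refine this.trans_le (le_of_eq ?_)
    field_simp
  have h8 : 2 * lam * D ≤ 8 * lam * (ρ / 4 ^ j) := by nlinarith
  rcases hor with h | h
  · exact ⟨j, hjJ, x, Or.inl rfl, k, hkB, b, hkb, hj1, h.trans_le h8⟩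
  · exact ⟨j, hjJ, y, Or.inr rfl, k, hkB, b, hkb, hj1, h.trans_le h8⟩

open Classical in
theorem aux_scale2 {X : Type*} [MetricSpace X] [MeasurableSpace X] (μ : Measure X)
    (B : Finset X) (w : X → ℝ≥0∞) (δ : ℝ) (hδ : 0 < δ)
    (hw : ∀ u ∈ B, ∀ v ∈ B, dist u v ≤ δ → qDelta μ 2 δ u v ≤ w v) (σ lam : ℝ) (hσ : 0 < σ)
    (hlam : 1 ≤ lam) (hδσ : δ < σ) (k b c : X) (hk : k ∈ B)
    (hkb : Relation.ReflTransGen (auxR B δ) k b) (h1 : σ ≤ dist k b)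
    (h2 : dist k c < 8 * lam * σ) :
    ∃ b' ∈ B, σ ≤ dist k b' ∧
      qDelta μ 2 δ k b' ≤ ∑ v ∈ B.filter (fun v => dist v c < 10 * lam * σ), w v := by
  obtain ⟨b', hb', hd, hr⟩ := aux_local B δ σ hδ.le hσ k b hk hkb h1
  refine ⟨b', hb', hd, ?_⟩
  refine (aux_path μ w δ b' _ _ rfl
    (fun u hu v hv => hw u (Finset.mem_filter.1 hu).1 v (Finset.mem_filter.1 hv).1) k
    (Finset.mem_filter.2 ⟨hk, by simp; linarith⟩) hr).trans ?_
  apply Finset.sum_le_sum_of_subset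
  intro v hv
  have hv := Finset.mem_filter.1 (Finset.mem_erase.1 hv).2
  refine Finset.mem_filter.2 ⟨hv.1, ?_⟩
  have := dist_triangle v k c
  rw [dist_comm v k] at this
  nlinarith [hv.2]

def auxC3 (CD CW : ℝ≥0) (P : ℕ) : ℝ≥0∞ := ((CD : ℝ≥0∞) ^ P) ^ (1 / 2 : ℝ) * (CW * CD + 1)

theorem auxC3_ne_top (CD CW : ℝ≥0) (P : ℕ) : auxC3 CD CW P ≠ ⊤ := by
  unfold auxC3
  refine ENNReal.mul_ne_top (ENNReal.rpow_ne_top_of_nonneg (by norm_num)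
    (ENNReal.pow_ne_top ENNReal.coe_ne_top)) ?_
  exact ENNReal.add_ne_top.2 ⟨ENNReal.mul_ne_top (by simp) (by simp), by simp⟩

theorem aux_vol (T : ℝ) (J : ℕ) (S : ℕ → Set ℝ) (Z : ℕ → ℝ≥0∞)
    (h : ∀ t, 0 < t → t < T → ∃ j ≤ J, t ∈ S j) (hS : ∀ j, volume (S j) ≤ Z j) :
    ENNReal.ofReal T ≤ ∑ j ∈ Finset.range (J + 1), Z j := by
  calc ENNReal.ofReal T = volume (Ioo 0 T) := by rw [Real.volume_Ioo, sub_zero]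
    _ ≤ volume (⋃ j ∈ Finset.range (J + 1), S j) := by
        apply measure_mono
        rintro t ⟨h1, h2⟩
        obtain ⟨j, hj, ht⟩ := h t h1 h2
        simp only [Set.mem_iUnion]
        exact ⟨j, by rw [Finset.mem_range]; lia, ht⟩
    _ ≤ ∑ j ∈ Finset.range (J + 1), volume (S j) := measure_biUnion_finset_le _ _
    _ ≤ _ := Finset.sum_le_sum fun j _ => hS j

theorem aux_main1 {X : Type*} [MetricSpace X] [MeasurableSpace X] [BorelSpace X]
    (lam : ℝ) (hlam : 1 ≤ lam) (hLLC : IsLLC X lam)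
    (φ : ℝ × ℝ → X) (hφ : IsOpenEmbedding φ) (p p' : ℝ × ℝ)
    (hp : p ∈ Icc (0:ℝ) 1 ×ˢ Icc (0:ℝ) 1) (hp' : p' ∈ Icc (0:ℝ) 1 ×ˢ Icc (0:ℝ) 1)
    (x y : X) (hx : φ p = x) (hy : φ p' = y) (ρ R0 : ℝ) (hρ : dist x y = ρ) (hρ0 : 0 < ρ)
    (hR0 : 5 * lam * ρ ≤ R0) (hball : Metric.ball x R0 ⊆ φ '' (Ioo (0:ℝ) 1 ×ˢ Ioo (0:ℝ) 1))
    (s0 : ℝ) (hs0 : 0 < s0) (J : ℕ) (hJ : ρ / 4 ^ J ≤ s0 / (4 * lam))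
    (δ : ℝ) (hδ : 0 < δ) (hδ2 : 3 * δ < ρ / 4 ^ J) {μ : Measure X} {CD CW : ℝ≥0}
    (h : IsDoublingWith μ CD) (P : ℕ) (hP : 24 * lam ≤ 2 ^ P)
    (hWδ : ∀ j ≤ J, ∀ a ∈ φ '' (Icc (0:ℝ) 1 ×ˢ Icc (0:ℝ) 1),
      ∀ b ∈ φ '' (Icc (0:ℝ) 1 ×ˢ Icc (0:ℝ) 1), ρ / 4 ^ j ≤ dist a b →
      μ (Metric.ball a (ρ / 4 ^ j)) ^ (1 / 2 : ℝ) ≤ (CW * CD + 1 : ℝ≥0∞) * qDelta μ 2 (3 * δ) a b) :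
    (⨅ b ∈ Metric.ball y s0, ⨅ a ∈ Metric.ball x s0, qDelta μ 2 (3 * δ) a b) ≤
      ((CD : ℝ≥0∞) ^ 4 * μ (Metric.ball y (2 * s0))) ^ (1 / 2 : ℝ) +
      ∑ j ∈ Finset.range (J + 1), (auxC3 CD CW P * (CD : ℝ≥0∞) ^ 4 *
        μ (Metric.ball x (16 * lam * ρ / 4 ^ j)) ^ (1 / 2 : ℝ) + auxC3 CD CW P * (CD : ℝ≥0∞) ^ 4 *
        μ (Metric.ball y (16 * lam * ρ / 4 ^ j)) ^ (1 / 2 : ℝ)) := by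
  classical
  have hlam0 : 0 < lam := by linarith
  have hδs : 3 * δ < s0 := by
    have : s0 / (4 * lam) ≤ s0 := div_le_self hs0.le (by linarith)
    linarith
  have hQ : IsCompact (φ '' (Icc (0:ℝ) 1 ×ˢ Icc (0:ℝ) 1)) :=
    (isCompact_Icc.prod isCompact_Icc).image hφ.continuous
  obtain ⟨N, hNQ, hNsep, hNcov⟩ := aux_net _ hQ δ hδ
  have hCD := aux_CD_one h x
  have hC3t := auxC3_ne_top CD CW P
  have hC30 : auxC3 CD CW P ≠ 0 := by
    unfold auxC3
    refine mul_ne_zero (ENNReal.rpow_pos ?_ (ENNReal.pow_ne_top ENNReal.coe_ne_top)).ne' (by simp)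
    exact ENNReal.pow_pos (zero_lt_one.trans_le hCD) _
  set u : X → ℝ≥0∞ := fun z => ⨅ a ∈ Metric.ball x s0, qDelta μ 2 (3 * δ) a z with hu
  set w := auxw μ CD δ with hwdef
  set L := ⨅ b ∈ Metric.ball y s0, u b with hL
  set W := ((CD : ℝ≥0∞) ^ 4 * μ (Metric.ball y (2 * s0))) ^ (1 / 2 : ℝ) with hW
  set Z : ℕ → X → ℝ≥0∞ := fun j c => auxC3 CD CW P * (CD : ℝ≥0∞) ^ 4 *
        μ (Metric.ball c (16 * lam * ρ / 4 ^ j)) ^ (1 / 2 : ℝ) with hZ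
  change L ≤ W + ∑ j ∈ Finset.range (J + 1), (Z j x + Z j y)
  have hWt : W ≠ ⊤ := by
    apply ENNReal.rpow_ne_top_of_nonneg (by norm_num)
    exact ENNReal.mul_ne_top (ENNReal.pow_ne_top ENNReal.coe_ne_top) (h.1 y _ (by positivity)).2.ne
  have hσJ : ∀ j ≤ J, ρ / 4 ^ J ≤ ρ / 4 ^ j := by
    intro j hj
    gcongr
    norm_num
  have hu_step : ∀ v v', dist v v' ≤ 3 * δ → u v' ≤ u v + w v' := by
    intro v v' hd
    have h1 := auxw_q h δ hδ v v' hd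
    simp only [hu, ENNReal.iInf_add]
    refine le_iInf fun a => le_iInf fun ha => ?_
    refine (iInf₂_le a ha).trans ((aux_q_tri μ 2 (3 * δ) a v v').trans ?_)
    gcongr
  have hux : ∀ v ∈ Metric.ball x s0, u v = 0 := by
    intro v hv
    have : u v ≤ qDelta μ 2 (3 * δ) v v := iInf₂_le v hv
    rw [aux_q_self] at this
    exact le_antisymm this zero_le
  have huy : ∀ v ∈ Metric.ball y s0, L ≤ u v := fun v hv => iInf₂_le v hv
  have hwy : ∀ v ∈ Metric.ball y s0, w v ≤ W := by
    intro v hv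
    apply ENNReal.rpow_le_rpow _ (by norm_num)
    gcongr
    apply Metric.ball_subset_ball'
    rw [Metric.mem_ball] at hv
    linarith
  -- the key inequality
  have key : ∀ t : ℝ, 0 < t → ENNReal.ofReal t + W < L → ∃ j ≤ J, ∃ c, (c = x ∨ c = y) ∧
      μ (Metric.ball c (10 * lam * (ρ / 4 ^ j) + δ / 2)) ^ (1 / 2 : ℝ) ≤
        auxC3 CD CW P * auxH (N.filter fun v => dist v c < 10 * lam * (ρ / 4 ^ j)) u w t := by
    intro t ht htL
    have ht' : 0 < ENNReal.ofReal t := ENNReal.ofReal_pos.2 ht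
    set B := N.filter fun n => ENNReal.ofReal t ≤ u n ∧ u n ≤ ENNReal.ofReal t + w n with hB
    have hBN : ∀ v ∈ B, v ∈ N := fun v hv => (Finset.mem_filter.1 hv).1
    obtain ⟨j, hj, c, hc, k, hkB, b, hkb, hdb, hdc⟩ := aux_scale lam hlam hLLC φ hφ p p' hp hp' x y
      hx hy ρ R0 hρ hρ0 hR0 hball s0 hs0 J hJ δ hδ (hδ2.le.trans hJ) hδ2 N B hNcov
      (fun v => u v < ENNReal.ofReal t)
      (by
        intro v hv v' hv' hd hvB hvB' hlt
        by_contra hcon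
        push Not at hcon
        refine hvB' (Finset.mem_filter.2 ⟨hv', hcon, (hu_step v v' hd).trans ?_⟩)
        gcongr)
      (by
        intro v hv hd
        change u v < _
        rw [hux v (by rw [Metric.mem_ball, dist_comm]; linarith)]
        exact ht')
      (by
        intro v hv hd
        change ¬ (u v < _)
        rw [not_lt]
        have := huy v (by rw [Metric.mem_ball, dist_comm]; linarith)
        exact (le_self_add.trans htL.le).trans this)
      (by
        intro v hv
        by_contra hcon
        push Not at hcon
        have h1 := (Finset.mem_filter.1 hv).2.1
        rw [hux v hcon] at h1
        exact absurd h1 (not_le.2 ht'))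
      (by
        intro v hv
        by_contra hcon
        push Not at hcon
        have h1 := (Finset.mem_filter.1 hv).2.2
        have h2 : ENNReal.ofReal t + w v ≤ ENNReal.ofReal t + W := by
          gcongr
          exact hwy v hcon
        exact absurd ((huy v hcon).trans (h1.trans h2)) (not_le.2 htL))
    refine ⟨j, hj, c, hc, ?_⟩
    set σ := ρ / 4 ^ j with hσ
    have hσ0 : 0 < σ := by positivity
    have hδσ : 3 * δ < σ := hδ2.trans_le (hσJ j hj)
    obtain ⟨b', hb', hdb', hq⟩ := aux_scale2 μ B w (3 * δ) (by positivity)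
      (fun u _ v _ hd => auxw_q h δ hδ u v hd) σ lam hσ0 hlam hδσ k b c hkB hkb hdb hdc
    have h1 := hWδ j hj k (hNQ _ (hBN k hkB)) b' (hNQ _ (hBN b' hb')) hdb'
    have hH : ∑ v ∈ B.filter (fun v => dist v c < 10 * lam * σ), w v =
        auxH (N.filter fun v => dist v c < 10 * lam * σ) u w t := by
      unfold auxH
      rw [← Finset.sum_filter, hB, Finset.filter_filter, Finset.filter_filter]
      refine Finset.sum_congr ?_ fun _ _ => rfl
      ext v
      simp only [Finset.mem_filter]
      tauto
    rw [hH] at hq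
    have hls : σ ≤ lam * σ := by nlinarith
    calc μ (Metric.ball c (10 * lam * σ + δ / 2)) ^ (1 / 2 : ℝ)
        ≤ ((CD : ℝ≥0∞) ^ P * μ (Metric.ball k σ)) ^ (1 / 2 : ℝ) := by
          apply ENNReal.rpow_le_rpow _ (by norm_num)
          refine le_trans (measure_mono ?_) (aux_dbl_pow h k σ hσ0 P)
          apply Metric.ball_subset_ball'
          rw [dist_comm] at hdc
          nlinarith
      _ = ((CD : ℝ≥0∞) ^ P) ^ (1 / 2 : ℝ) * μ (Metric.ball k σ) ^ (1 / 2 : ℝ) :=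
          ENNReal.mul_rpow_of_nonneg _ _ (by norm_num)
      _ ≤ ((CD : ℝ≥0∞) ^ P) ^ (1 / 2 : ℝ) * ((CW * CD + 1 : ℝ≥0∞) *
            auxH (N.filter fun v => dist v c < 10 * lam * σ) u w t) := by
          gcongr
          exact h1.trans (by gcongr)
      _ = _ := (mul_assoc _ _ _).symm
  -- volumes
  have hvol : ∀ j ≤ J, ∀ c, volume {t : ℝ | 0 < t ∧
      μ (Metric.ball c (10 * lam * (ρ / 4 ^ j) + δ / 2)) ^ (1 / 2 : ℝ) ≤
        auxC3 CD CW P * auxH (N.filter fun v => dist v c < 10 * lam * (ρ / 4 ^ j)) u w t} ≤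
      Z j c := by
    intro j hj c
    refine (aux_level h δ hδ N hNsep u c (10 * lam * (ρ / 4 ^ j)) (by positivity) _ hC30 hC3t _
      rfl).trans ?_
    simp only [hZ]
    gcongr
    have h3 := hδ2.trans_le (hσJ j hj)
    have h4 : ρ / 4 ^ j ≤ lam * (ρ / 4 ^ j) := le_mul_of_one_le_left (by positivity) hlam
    rw [mul_div_assoc]
    linarith
  have key2 : ∀ T : ℝ, ENNReal.ofReal T + W ≤ L →
      ENNReal.ofReal T ≤ ∑ j ∈ Finset.range (J + 1), (Z j x + Z j y) := by
    intro T hT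
    refine aux_vol T J (fun j => {t | j ≤ J ∧ ∃ c, (c = x ∨ c = y) ∧ 0 < t ∧
      μ (Metric.ball c (10 * lam * (ρ / 4 ^ j) + δ / 2)) ^ (1 / 2 : ℝ) ≤
        auxC3 CD CW P * auxH (N.filter fun v => dist v c < 10 * lam * (ρ / 4 ^ j)) u w t}) _ ?_ ?_
    · intro t h0 h1
      obtain ⟨j, hj, c, hc, hh⟩ := key t h0 (lt_of_lt_of_le (ENNReal.add_lt_add_right hWt
        ((ENNReal.ofReal_lt_ofReal_iff (h0.trans h1)).2 h1)) hT)
      exact ⟨j, hj, hj, c, hc, h0, hh⟩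
    · intro j
      by_cases hj : j ≤ J
      · refine le_trans (measure_mono ?_) ((measure_union_le _ _).trans
          (add_le_add (hvol j hj x) (hvol j hj y)))
        rintro t ⟨_, c, rfl | rfl, h1⟩
        · exact Or.inl h1
        · exact Or.inr h1
      · simp [hj]
  by_contra hcon
  push Not at hcon
  obtain ⟨M, hM1, hM2⟩ := exists_between hcon
  have hMt : M ≠ ⊤ := (hM2.trans_le le_top).ne
  have hWM : W ≤ M := le_self_add.trans hM1.le
  have hT : ENNReal.ofReal (M - W).toReal = M - W :=
    ENNReal.ofReal_toReal (ENNReal.sub_ne_top hMt)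
  have h1 := key2 (M - W).toReal (by rw [hT, tsub_add_cancel_of_le hWM]; exact hM2.le)
  rw [hT, tsub_le_iff_left] at h1
  exact absurd h1 (not_le.2 hM1)

def auxC5 (CD CW : ℝ≥0) (P : ℕ) : ℝ≥0∞ := 2 * (auxC3 CD CW P * (CD : ℝ≥0∞) ^ 4 * auxCs CD)

theorem auxC5_ne_top (CD CW : ℝ≥0) (P : ℕ) : auxC5 CD CW P ≠ ⊤ := by
  unfold auxC5
  exact ENNReal.mul_ne_top (by simp) (ENNReal.mul_ne_top (ENNReal.mul_ne_top
    (auxC3_ne_top CD CW P) (ENNReal.pow_ne_top ENNReal.coe_ne_top)) (auxCs_ne_top CD))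

theorem aux_est {X : Type*} [MetricSpace X] [MeasurableSpace X] [BorelSpace X] [ConnectedSpace X]
    (lam : ℝ) (hlam : 1 ≤ lam) (hLLC : IsLLC X lam)
    (φ : ℝ × ℝ → X) (hφ : IsOpenEmbedding φ) (p p' : ℝ × ℝ)
    (hp : p ∈ Icc (0:ℝ) 1 ×ˢ Icc (0:ℝ) 1) (hp' : p' ∈ Icc (0:ℝ) 1 ×ˢ Icc (0:ℝ) 1)
    (x y z1 : X) (hx : φ p = x) (hy : φ p' = y) (ρ R0 : ℝ) (hρ : dist x y = ρ) (hρ0 : 0 < ρ)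
    (hR0 : 5 * lam * ρ ≤ R0) (hball : Metric.ball x R0 ⊆ φ '' (Ioo (0:ℝ) 1 ×ˢ Ioo (0:ℝ) 1))
    (hz : 9 * lam * ρ ≤ dist x z1)
    {μ : Measure X} {CD CW : ℝ≥0}
    (h : IsDoublingWith μ CD) (hw : IsWMDM μ 2 CW) (hna : ∀ (a : X) (ε : ℝ≥0∞), 0 < ε →
      ∃ r : ℝ, 0 < r ∧ μ (Metric.ball a r) ^ (1 / 2 : ℝ) ≤ ε) (P : ℕ) (hP : 24 * lam ≤ 2 ^ P) :
    qmu μ 2 x y ≤ auxC5 CD CW P * μ (Metric.ball x (17 * lam * ρ)) ^ (1 / 2 : ℝ) := by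
  have hlam0 : 0 < lam := by linarith
  have hlρ : ρ ≤ lam * ρ := by nlinarith
  refine aux_qmu_le μ 2 x y _ fun δ1 hδ1 => ?_
  apply ENNReal.le_of_forall_pos_le_add
  intro ε hε _
  have hε4 : (0:ℝ≥0∞) < ε / 4 := ENNReal.div_pos (by simpa using hε.ne') (by simp)
  have hε4t : (ε / 4 : ℝ≥0∞) ≠ ⊤ := ENNReal.div_ne_top (by simp) (by simp)
  have hCD4 : ((CD : ℝ≥0∞) ^ 4) ^ (1 / 2 : ℝ) ≠ ⊤ := ENNReal.rpow_ne_top_of_nonneg (by norm_num)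
    (ENNReal.pow_ne_top ENNReal.coe_ne_top)
  have hCD40 : ((CD : ℝ≥0∞) ^ 4) ^ (1 / 2 : ℝ) ≠ 0 := by
    refine (ENNReal.rpow_pos ?_ (ENNReal.pow_ne_top ENNReal.coe_ne_top)).ne'
    exact ENNReal.pow_pos (zero_lt_one.trans_le (aux_CD_one h x)) _
  obtain ⟨r1, hr1, h1⟩ := aux_near hna x _ hε4 δ1 hδ1
  obtain ⟨r2, hr2, h2⟩ := aux_near hna y _ hε4 δ1 hδ1
  obtain ⟨r3, hr3, h3⟩ := hna y (ε / 4 / ((CD : ℝ≥0∞) ^ 4) ^ (1 / 2 : ℝ))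
    (ENNReal.div_pos hε4.ne' hCD4)
  obtain ⟨s0, hs0, hs1, hs2, hs3⟩ : ∃ s0 : ℝ, 0 < s0 ∧ s0 ≤ r1 ∧ s0 ≤ r2 ∧ 2 * s0 ≤ r3 := by
    refine ⟨min r1 (min r2 (r3 / 2)), by positivity, min_le_left _ _,
      (min_le_right _ _).trans (min_le_left _ _), ?_⟩
    have : min r1 (min r2 (r3 / 2)) ≤ r3 / 2 := (min_le_right _ _).trans (min_le_right _ _)
    linarith
  obtain ⟨J, hJ⟩ : ∃ J : ℕ, ρ / 4 ^ J ≤ s0 / (4 * lam) := by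
    obtain ⟨J, hJ⟩ := exists_pow_lt_of_lt_one (show 0 < s0 / (4 * lam) / ρ by positivity)
      (show (1 / 4 : ℝ) < 1 by norm_num)
    refine ⟨J, ?_⟩
    rw [lt_div_iff₀ hρ0] at hJ
    rw [div_pow, one_pow] at hJ
    refine le_trans (le_of_eq ?_) hJ.le
    ring
  have hQ : IsCompact (φ '' (Icc (0:ℝ) 1 ×ˢ Icc (0:ℝ) 1)) :=
    (isCompact_Icc.prod isCompact_Icc).image hφ.continuous
  have hWj : ∀ j : ℕ, _ := fun j : ℕ => aux_W h hw hna _ hQ (ρ / 4 ^ j) (by positivity)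
  choose d hd0 hd using hWj
  have hne : (Finset.range (J + 1)).Nonempty := ⟨0, by simp⟩
  set e := (Finset.range (J + 1)).inf' hne d with he
  have he0 : 0 < e := by
    rw [he, Finset.lt_inf'_iff]
    exact fun j _ => hd0 j
  obtain ⟨δ, hδ, hδe, hδρ, hδδ⟩ : ∃ δ : ℝ, 0 < δ ∧ 3 * δ ≤ e ∧ 3 * δ < ρ / 4 ^ J ∧ 3 * δ ≤ δ1 := by
    have hpos : 0 < min e (min (ρ / 4 ^ J) δ1) := by positivity
    have i1 := min_le_left e (min (ρ / 4 ^ J) δ1)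
    have i2 := (min_le_right e (min (ρ / 4 ^ J) δ1)).trans (min_le_left _ _)
    have i3 := (min_le_right e (min (ρ / 4 ^ J) δ1)).trans (min_le_right _ _)
    refine ⟨min e (min (ρ / 4 ^ J) δ1) / 4, by positivity, ?_, ?_, ?_⟩ <;> linarith
  have hmain := aux_main1 lam hlam hLLC φ hφ p p' hp hp' x y hx hy ρ R0 hρ hρ0 hR0 hball s0 hs0 J hJ
    δ hδ hδρ h (CW := CW) P hP (fun j hj a ha b hb hab => hd j (3 * δ)
      (hδe.trans (Finset.inf'_le _ (by rw [Finset.mem_range]; lia))) a ha b hb hab)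
  set m := μ (Metric.ball x (17 * lam * ρ)) ^ (1 / 2 : ℝ) with hm
  have hmt : m ≠ ⊤ := ENNReal.rpow_ne_top_of_nonneg (by norm_num) (h.1 x _ (by positivity)).2.ne
  have hWb : ((CD : ℝ≥0∞) ^ 4 * μ (Metric.ball y (2 * s0))) ^ (1 / 2 : ℝ) ≤ ε / 4 := by
    rw [ENNReal.mul_rpow_of_nonneg _ _ (by norm_num)]
    calc _ ≤ ((CD : ℝ≥0∞) ^ 4) ^ (1 / 2 : ℝ) * (ε / 4 / ((CD : ℝ≥0∞) ^ 4) ^ (1 / 2 : ℝ)) := by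
          gcongr
          refine le_trans ?_ h3
          gcongr
      _ = _ := ENNReal.mul_div_cancel hCD40 hCD4
  have hzy : 8 * lam * ρ ≤ dist y z1 := by
    have := dist_triangle x y z1
    linarith
  have hZ : ∑ j ∈ Finset.range (J + 1), (auxC3 CD CW P * (CD : ℝ≥0∞) ^ 4 *
        μ (Metric.ball x (16 * lam * ρ / 4 ^ j)) ^ (1 / 2 : ℝ) + auxC3 CD CW P * (CD : ℝ≥0∞) ^ 4 *
        μ (Metric.ball y (16 * lam * ρ / 4 ^ j)) ^ (1 / 2 : ℝ)) ≤ auxC5 CD CW P * m := by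
    rw [Finset.sum_add_distrib, ← Finset.mul_sum, ← Finset.mul_sum]
    have g1 := aux_geo h x z1 (16 * lam * ρ) (by positivity) (by linarith) (J + 1)
    have g2 := aux_geo h y z1 (16 * lam * ρ) (by positivity) (by linarith) (J + 1)
    have g3 : μ (Metric.ball x (16 * lam * ρ)) ^ (1 / 2 : ℝ) ≤ m := by
      apply ENNReal.rpow_le_rpow _ (by norm_num)
      exact measure_mono (Metric.ball_subset_ball (by linarith))
    have g4 : μ (Metric.ball y (16 * lam * ρ)) ^ (1 / 2 : ℝ) ≤ m := by
      apply ENNReal.rpow_le_rpow _ (by norm_num)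
      apply measure_mono
      apply Metric.ball_subset_ball'
      rw [dist_comm]
      linarith
    calc _ ≤ auxC3 CD CW P * (CD : ℝ≥0∞) ^ 4 * (auxCs CD * m) +
          auxC3 CD CW P * (CD : ℝ≥0∞) ^ 4 * (auxCs CD * m) := by
          gcongr
          · exact g1.trans (by gcongr)
          · exact g2.trans (by gcongr)
      _ = _ := by unfold auxC5; ring
  have hlt : (⨅ b ∈ Metric.ball y s0, ⨅ a ∈ Metric.ball x s0, qDelta μ 2 (3 * δ) a b) <
      (ε / 4 + auxC5 CD CW P * m) + ε / 4 := by
    refine lt_of_le_of_lt (hmain.trans (add_le_add hWb hZ)) ?_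
    exact ENNReal.lt_add_right (ENNReal.add_ne_top.2 ⟨hε4t,
      ENNReal.mul_ne_top (auxC5_ne_top CD CW P) hmt⟩) hε4.ne'
  simp only [iInf_lt_iff] at hlt
  obtain ⟨b, hb, a, ha, hab⟩ := hlt
  rw [Metric.mem_ball, dist_comm] at ha hb
  have q1 := h1 a (ha.le.trans hs1)
  have q2 := h2 b (hb.le.trans hs2)
  rw [aux_q_symm] at q2
  have hε44 : (ε / 4 + (ε / 4 + (ε / 4 + ε / 4)) : ℝ≥0∞) = ε := by
    calc (ε / 4 + (ε / 4 + (ε / 4 + ε / 4)) : ℝ≥0∞) = 4 * (ε / 4) := by ring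
      _ = ε := ENNReal.mul_div_cancel (by simp) (by simp)
  calc qDelta μ 2 δ1 x y ≤ qDelta μ 2 δ1 x a + (qDelta μ 2 δ1 a b + qDelta μ 2 δ1 b y) := by
        refine (aux_q_tri μ 2 δ1 x a y).trans ?_
        gcongr
        exact aux_q_tri μ 2 δ1 a b y
    _ ≤ ε / 4 + (((ε / 4 + auxC5 CD CW P * m) + ε / 4) + ε / 4) := by
        gcongr
        exact (aux_q_anti μ 2 a b hδδ).trans hab.le
    _ = auxC5 CD CW P * m + (ε / 4 + (ε / 4 + (ε / 4 + ε / 4))) := by ring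
    _ = _ := by rw [hε44]

theorem aux_cont {X : Type*} [MetricSpace X] [MeasurableSpace X] [BorelSpace X] [ConnectedSpace X]
    (lam : ℝ) (hlam : 1 ≤ lam) (hLLC : IsLLC X lam)
    (hhom : ∃ Ω₀ : Set ↥Sphere2, IsCircleDomainS2 Ω₀ ∧ Nonempty (X ≃ₜ ↥Ω₀))
    {μ : Measure X} {CD CW : ℝ≥0} (h : IsDoublingWith μ CD) (hw : IsWMDM μ 2 CW)
    (x : X) (ε : ℝ≥0∞) (hε : 0 < ε) :
    ∃ δ : ℝ, 0 < δ ∧ ∀ y : X, dist x y < δ → qmu μ 2 x y < ε := by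
  have hlam0 : 0 < lam := by linarith
  have hoth : ∀ a : X, ∃ b, a ≠ b := by
    intro a
    obtain ⟨φ, hφ, hφa⟩ := aux_chart hhom a
    refine ⟨φ (0, 0), ?_⟩
    rw [← hφa]
    intro he
    have := congrArg Prod.fst (hφ.injective he)
    norm_num at this
  have hna : ∀ (a : X) (ε : ℝ≥0∞), 0 < ε →
      ∃ r : ℝ, 0 < r ∧ μ (Metric.ball a r) ^ (1 / 2 : ℝ) ≤ ε := by
    intro a ε hε
    obtain ⟨b, hb⟩ := hoth a
    exact aux_small h a b hb ε hε
  obtain ⟨φ, hφ, hφx⟩ := aux_chart hhom x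
  obtain ⟨z1, hz1⟩ := hoth x
  have hz1' : 0 < dist x z1 := dist_pos.2 hz1
  obtain ⟨P, hP⟩ := pow_unbounded_of_one_lt (24 * lam) (show (1:ℝ) < 2 by norm_num)
  have hopen : IsOpen (φ '' (Ioo (0:ℝ) 1 ×ˢ Ioo (0:ℝ) 1)) :=
    hφ.isOpenMap _ (isOpen_Ioo.prod isOpen_Ioo)
  obtain ⟨R0, hR0, hball⟩ := Metric.isOpen_iff.1 hopen x
    ⟨(1 / 2, 1 / 2), ⟨by norm_num, by norm_num⟩, hφx⟩
  set C := auxC5 CD CW P + 1 with hC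
  have hCt : C ≠ ⊤ := ENNReal.add_ne_top.2 ⟨auxC5_ne_top CD CW P, by simp⟩
  have hC0 : C ≠ 0 := by simp [hC]
  set e : ℝ≥0∞ := min ε 1 / 2 with he
  have hm0 : min ε 1 ≠ 0 := (lt_min hε zero_lt_one).ne'
  have hmt : min ε 1 ≠ ⊤ := (lt_of_le_of_lt (min_le_right _ _) ENNReal.one_lt_top).ne
  have he0 : 0 < e := ENNReal.half_pos hm0
  have heε : e < ε := (ENNReal.half_lt_self hm0 hmt).trans_le (min_le_left _ _)
  obtain ⟨r, hr, hre⟩ := hna x (e / C) (ENNReal.div_pos he0.ne' hCt)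
  refine ⟨min (R0 / (5 * lam)) (min (dist x z1 / (9 * lam)) (r / (17 * lam))), by positivity,
    fun y hy => ?_⟩
  rw [lt_min_iff, lt_min_iff, lt_div_iff₀ (by positivity), lt_div_iff₀ (by positivity),
    lt_div_iff₀ (by positivity)] at hy
  obtain ⟨hy1, hy2, hy3⟩ := hy
  by_cases hxy : x = y
  · subst hxy
    rw [aux_qmu_self]
    exact hε
  have hρ0 : 0 < dist x y := dist_pos.2 hxy
  have hyb : y ∈ Metric.ball x R0 := by
    rw [Metric.mem_ball, dist_comm]
    nlinarith
  obtain ⟨p', hp', hφp'⟩ := hball hyb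
  have hest := aux_est lam hlam hLLC φ hφ (1 / 2, 1 / 2) p' ⟨by norm_num, by norm_num⟩
    ⟨Ioo_subset_Icc_self hp'.1, Ioo_subset_Icc_self hp'.2⟩ x y z1 hφx hφp' (dist x y) R0 rfl hρ0
    (by linarith) hball (by linarith) h hw hna P hP.le
  refine lt_of_le_of_lt ?_ heε
  calc qmu μ 2 x y ≤ auxC5 CD CW P * μ (Metric.ball x (17 * lam * dist x y)) ^ (1 / 2 : ℝ) := hest
    _ ≤ C * (e / C) := by
        gcongr
        · exact le_self_add
        · refine le_trans ?_ hre
          gcongr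
          linarith
    _ = e := ENNReal.mul_div_cancel hC0 hCt

theorem statement3
    {X : Type*} [MetricSpace X] [MeasurableSpace X] [BorelSpace X]
    (lam : ℝ) (CD CW : ℝ≥0) (M : ℕ) (μ : Measure X)
    (hlam : 1 ≤ lam) (hLLC : IsLLC X lam)
    (hhom : ∃ Ω₀ : Set ↥Sphere2, IsCircleDomainS2 Ω₀ ∧ Nonempty (X ≃ₜ ↥Ω₀))
    (hcpt : CompactSpace (Completion X))
    (hfin : (residComps X).Finite) (hM : (residComps X).ncard = M)
    (hreg : μ.Regular) (hdbl : IsDoublingWith μ CD) (hw : IsWMDM μ 2 CW) :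
    (∀ x y : X, qmu μ 2 x y ≠ ⊤) ∧
      (∀ x : X, qmu μ 2 x x = 0) ∧
      (∀ x y : X, qmu μ 2 x y = 0 → x = y) ∧
      (∀ x y : X, qmu μ 2 x y = qmu μ 2 y x) ∧
      (∀ x y z : X, qmu μ 2 x z ≤ qmu μ 2 x y + qmu μ 2 y z) ∧
      (∀ (x : X) (ε : ℝ≥0∞), 0 < ε → ∃ δ : ℝ, 0 < δ ∧
        ∀ y : X, dist x y < δ → qmu μ 2 x y < ε) ∧
      (∀ (x : X) (δ : ℝ), 0 < δ → ∃ ε : ℝ≥0∞, 0 < ε ∧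
        ∀ y : X, qmu μ 2 x y < ε → dist x y < δ) := by

  have hconn : ConnectedSpace X := by
    obtain ⟨Ω₀, hΩ, ⟨e⟩⟩ := hhom
    have : ConnectedSpace ↥Ω₀ := isConnected_iff_connectedSpace.1 hΩ.2.1
    exact e.symm.surjective.connectedSpace e.symm.continuous
  have hcont := aux_cont lam hlam hLLC hhom hdbl hw
  have htri : ∀ x y z : X, qmu μ 2 x z ≤ qmu μ 2 x y + qmu μ 2 y z :=
    fun x y z => aux_qmu_tri μ 2 x y z
  have hsymm : ∀ x y : X, qmu μ 2 x y = qmu μ 2 y x := fun x y => aux_qmu_symm μ 2 x y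
  have hpos : ∀ (x : X) (r : ℝ), 0 < r → 0 < μ (Metric.ball x r) ^ (1 / 2 : ℝ) := fun x r hr =>
    ENNReal.rpow_pos (hdbl.1 x r hr).1 (hdbl.1 x r hr).2.ne
  have hlow : ∀ (x y : X) (r : ℝ), r ≤ dist x y →
      μ (Metric.ball x r) ^ (1 / 2 : ℝ) ≤ CW * qmu μ 2 x y := by
    intro x y r hr
    refine le_trans ?_ (hw x y)
    apply ENNReal.rpow_le_rpow _ (by norm_num)
    exact measure_mono ((Metric.ball_subset_ball hr).trans subset_union_left)
  refine ⟨?_, fun x => aux_qmu_self μ 2 x, ?_, hsymm, htri, hcont, ?_⟩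
  · intro x y
    have hclopen : IsClopen {y | qmu μ 2 x y ≠ ⊤} := by
      constructor
      · rw [← isOpen_compl_iff, Metric.isOpen_iff]
        intro y hy
        obtain ⟨δ, hδ, hd⟩ := hcont y 1 one_pos
        refine ⟨δ, hδ, fun z hz hz' => hy ?_⟩
        rw [Metric.mem_ball, dist_comm] at hz
        have h1 := htri x z y
        rw [hsymm z y] at h1
        exact (h1.trans_lt (ENNReal.add_lt_top.2
          ⟨lt_top_iff_ne_top.2 hz', (hd z hz).trans ENNReal.one_lt_top⟩)).ne
      · rw [Metric.isOpen_iff]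
        intro y hy
        obtain ⟨δ, hδ, hd⟩ := hcont y 1 one_pos
        refine ⟨δ, hδ, fun z hz => ?_⟩
        rw [Metric.mem_ball, dist_comm] at hz
        exact ((htri x y z).trans_lt (ENNReal.add_lt_top.2
          ⟨lt_top_iff_ne_top.2 hy, (hd z hz).trans ENNReal.one_lt_top⟩)).ne
    have huniv := hclopen.eq_univ ⟨x, by
      change qmu μ 2 x x ≠ ⊤
      rw [aux_qmu_self]; exact ENNReal.zero_ne_top⟩
    have : y ∈ {y | qmu μ 2 x y ≠ ⊤} := by rw [huniv]; trivial
    exact this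
  · intro x y hq
    by_contra hne
    have hd := dist_pos.2 hne
    have h1 := hlow x y (dist x y) le_rfl
    rw [hq, mul_zero] at h1
    exact absurd h1 (not_le.2 (hpos x _ hd))
  · intro x δ hδ
    refine ⟨μ (Metric.ball x δ) ^ (1 / 2 : ℝ) / (CW + 1), ENNReal.div_pos (hpos x δ hδ).ne'
      (by simp), fun y hy => ?_⟩
    by_contra hcon
    push Not at hcon
    have h1 := hlow x y δ hcon
    rw [ENNReal.lt_div_iff_mul_lt (Or.inl (by simp)) (Or.inl (by simp))] at hy
    have h2 : (CW : ℝ≥0∞) * qmu μ 2 x y ≤ qmu μ 2 x y * (CW + 1) := by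
      rw [mul_comm]
      gcongr
      exact le_self_add
    exact absurd (h1.trans h2) (not_le.2 hy)

end
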